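/- arXiv:1006.0027 — 6 statements merged into one kernel-verified Lean document; each statement's English description precedes it below -/
import Mathlib

section
/- For every n ≥ 0, the following family is a ℂ-vector-space basis of L_n: all products ∏_{j=1}^{n} φ_j in which, for each j = 1,…,n independently, either φ_j = z_j^{ℓ_j} for some integer ℓ_j ≥ 0, or φ_j = (z_j − z_{i_j})^{k_j} for some index i_j < j and some integer k_j < 0. (For n = 0 the family consists of the single element 1.) -/
open MvPolynomial

/-- The field `ℂ(z_1,…,z_n)` of rational functions in `n` variables. -/
abbrev RatField (n : ℕ) : Type := FractionRing (MvPolynomial (Fin n) ℂ)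

/-- The variable `z_i`, viewed inside the rational function field. -/
noncomputable def Zvar (n : ℕ) (i : Fin n) : RatField n :=
  algebraMap (MvPolynomial (Fin n) ℂ) (RatField n) (X i)

/-- `L_n`: the ℂ-subalgebra of `ℂ(z_1,…,z_n)` generated by the variables `z_i`
together with the inverses `(z_i - z_j)⁻¹` for `i ≠ j` (local functions). -/
noncomputable def LocalFn (n : ℕ) : Subalgebra ℂ (RatField n) :=
  Algebra.adjoin ℂ
    (Set.range (Zvar n) ∪ {x | ∃ i j : Fin n, i ≠ j ∧ x = (Zvar n i - Zvar n j)⁻¹})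

/-- Index data for the basis: for each `j`, either a nonnegative exponent `ℓ_j`
(giving the factor `z_j ^ ℓ_j`), or a pair `(i_j, m_j)` with `i_j < j`
(giving the factor `(z_j - z_{i_j}) ^ (-(m_j + 1))`, a negative power). -/
def BasisIdx (n : ℕ) : Type := ∀ j : Fin n, ℕ ⊕ {p : Fin n × ℕ // p.1 < j}

/-- The basis element of `L_n` corresponding to an index `c`: the product over `j`
of `z_j ^ ℓ_j` or `(z_j - z_{i_j}) ^ (k_j)` with `k_j = -(m_j+1) < 0` as indicated by `c j`. -/
noncomputable def basisElem (n : ℕ) (c : BasisIdx n) : RatField n :=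
  ∏ j : Fin n,
    Sum.elim (fun ℓ : ℕ => Zvar n j ^ ℓ)
      (fun p : {p : Fin n × ℕ // p.1 < j} =>
        (Zvar n j - Zvar n p.1.1) ^ (-(p.1.2 + 1) : ℤ)) (c j)

/-- One-variable factors. -/
noncomputable def stepFam {K : Type*} [Field K] {n : ℕ} (a : Fin n → K) (x : K) :
    ℕ ⊕ Fin n × ℕ → K
  | Sum.inl l => x ^ l
  | Sum.inr p => ((x - a p.1)⁻¹) ^ (p.2 + 1)

theorem stepFam_linInd {K F : Type*} [Field K] [Field F] [Algebra K F] {n : ℕ} (a : Fin n → K)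
    (ha : Function.Injective a) (x : F) (hx : Transcendental K x) :
    LinearIndependent K (stepFam (fun i => algebraMap K F (a i)) x) := by
  classical
  rw [linearIndependent_iff'']
  intro s g hg hsum
  obtain ⟨N, hN⟩ : ∃ N : ℕ, ∀ d ∈ s, Sum.elim id (fun p : Fin n × ℕ => p.2) d < N :=
    ⟨s.sup (Sum.elim id (fun p : Fin n × ℕ => p.2)) + 1, fun d hd =>
      Nat.lt_succ_of_le (Finset.le_sup (f := Sum.elim id (fun p : Fin n × ℕ => p.2)) hd)⟩
  have hsub : s ⊆ (Finset.range N).disjSum (Finset.univ ×ˢ Finset.range N) := by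
    intro d hd
    have := hN d hd
    rcases d with l | p <;> simpa using this
  rw [Finset.sum_subset hsub (fun d _ hd => by rw [hg d hd, zero_smul]),
    Finset.sum_disjSum, Finset.sum_product] at hsum
  letI : Algebra (Polynomial K) F := (Polynomial.aeval x).toAlgebra
  have hmap : ∀ p : Polynomial K, algebraMap (Polynomial K) F p = Polynomial.aeval x p :=
    fun p => rfl
  haveI : FaithfulSMul (Polynomial K) F := by
    rw [faithfulSMul_iff_algebraMap_injective]
    exact transcendental_iff_injective.mp hx
  have hxa : ∀ i, x - algebraMap K F (a i) ≠ 0 := by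
    intro i h
    rw [sub_eq_zero] at h
    exact hx (h ▸ isAlgebraic_algebraMap _)
  have key := Polynomial.quo_add_sum_rem_mul_pow_inverse_unique (R := K) (K := F)
    (s := (Finset.univ : Finset (Fin n)))
    (g := fun i => Polynomial.X - Polynomial.C (a i))
    (fun i _ => Polynomial.monic_X_sub_C _)
    (fun i _ j _ hij => Polynomial.isCoprime_X_sub_C_of_isUnit_sub
      (sub_ne_zero.mpr (fun h => hij (ha h))).isUnit)
    (n := fun _ => N) (gi := fun i => (x - algebraMap K F (a i))⁻¹)
    (fun i _ => by rw [hmap]; simp [hxa i])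
    (q₁ := ∑ l ∈ Finset.range N, Polynomial.C (g (Sum.inl l)) * Polynomial.X ^ l) (q₂ := 0)
    (r₁ := fun i j => Polynomial.C (g (Sum.inr (i, j.1)))) (r₂ := fun _ _ => 0)
    (fun i _ j => by
      rw [Polynomial.degree_X_sub_C]
      exact lt_of_le_of_lt Polynomial.degree_C_le (by norm_num))
    (fun i _ j => by
      rw [Polynomial.degree_X_sub_C, Polynomial.degree_zero]
      exact WithBot.bot_lt_coe 1)
    (by
      simp only [hmap, map_sum, map_mul, map_pow, Polynomial.aeval_C, Polynomial.aeval_X,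
        map_zero, zero_mul, Finset.sum_const_zero, add_zero]
      rw [← hsum]
      congr 1
      · exact Finset.sum_congr rfl fun l _ => by rw [Algebra.smul_def]; rfl
      · refine Finset.sum_congr rfl fun i _ => ?_
        rw [Finset.sum_range]
        exact Finset.sum_congr rfl fun l _ => by rw [Algebra.smul_def]; rfl)
  intro d
  by_cases hd : d ∈ s
  · have hlt := hN d hd
    rcases d with l | ⟨i, m⟩
    · have h1 := congrArg (fun p => Polynomial.coeff p l) key.1
      simp only [Polynomial.finsetSum_coeff, Polynomial.coeff_C_mul_X_pow,
        Polynomial.coeff_zero] at h1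
      rw [Finset.sum_ite_eq] at h1
      simpa using (if_pos (Finset.mem_range.mpr hlt)).symm.trans h1
    · have h1 := congrFun (key.2 i (Finset.mem_univ _)) ⟨m, hlt⟩
      simpa using h1
  · exact hg d hd

/-- Generic version of `basisElem`. -/
noncomputable def genElem {F : Type*} [Field F] {n : ℕ} (z : Fin n → F) (c : BasisIdx n) : F :=
  ∏ j : Fin n,
    Sum.elim (fun ℓ : ℕ => z j ^ ℓ)
      (fun p : {p : Fin n × ℕ // p.1 < j} =>
        (z j - z p.1.1) ^ (-(p.1.2 + 1) : ℤ)) (c j)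

/-- Extend an index by a choice for the last variable. -/
def upIdx {n : ℕ} (b : BasisIdx n) (d : ℕ ⊕ Fin n × ℕ) : BasisIdx (n + 1) :=
  Fin.lastCases
    (Sum.map id (fun p => ⟨(p.1.castSucc, p.2), Fin.castSucc_lt_last _⟩) d)
    (fun j => Sum.map id (fun p => ⟨(p.1.1.castSucc, p.1.2), Fin.castSucc_lt_castSucc_iff.mpr p.2⟩)
      (b j))

theorem upIdx_surj {n : ℕ} (c : BasisIdx (n + 1)) :
    ∃ p : BasisIdx n × (ℕ ⊕ Fin n × ℕ), upIdx p.1 p.2 = c := by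
  have h1 : ∀ j : Fin n, ∃ b : ℕ ⊕ {p : Fin n × ℕ // p.1 < j},
      Sum.map id (fun p => (⟨(p.1.1.castSucc, p.1.2), Fin.castSucc_lt_castSucc_iff.mpr p.2⟩ :
        {p : Fin (n + 1) × ℕ // p.1 < j.castSucc})) b = c j.castSucc := by
    intro j
    rcases c j.castSucc with l | ⟨⟨i, m⟩, h⟩
    · exact ⟨Sum.inl l, rfl⟩
    · have h' : i.1 < j.1 := h
      exact ⟨Sum.inr ⟨(⟨i.1, h'.trans j.2⟩, m), h'⟩, rfl⟩
  choose b hb using h1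
  have h2 : ∃ d : ℕ ⊕ Fin n × ℕ,
      Sum.map id (fun p => (⟨(p.1.castSucc, p.2), Fin.castSucc_lt_last _⟩ :
        {p : Fin (n + 1) × ℕ // p.1 < Fin.last n})) d = c (Fin.last n) := by
    rcases c (Fin.last n) with l | ⟨⟨i, m⟩, h⟩
    · exact ⟨Sum.inl l, rfl⟩
    · exact ⟨Sum.inr (⟨i.1, h⟩, m), rfl⟩
  obtain ⟨d, hd⟩ := h2
  refine ⟨(b, d), ?_⟩
  funext j
  refine Fin.lastCases ?_ (fun j => ?_) j
  · simp only [upIdx, Fin.lastCases_last]; exact hd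
  · simp only [upIdx, Fin.lastCases_castSucc]; exact hb j

theorem genElem_upIdx {F : Type*} [Field F] {n : ℕ} (z : Fin (n + 1) → F) (b : BasisIdx n)
    (d : ℕ ⊕ Fin n × ℕ) :
    genElem z (upIdx b d) =
      genElem (fun i => z i.castSucc) b * stepFam (fun i => z i.castSucc) (z (Fin.last n)) d := by
  unfold genElem
  rw [Fin.prod_univ_castSucc]
  congr 1
  · refine Finset.prod_congr rfl fun j _ => ?_
    simp only [upIdx, Fin.lastCases_castSucc]
    rcases b j with l | p <;> simp
  · simp only [upIdx, Fin.lastCases_last]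
    rcases d with l | p
    · simp [stepFam]
    · simp only [stepFam, Sum.map_inr, Sum.elim_inr]
      rw [inv_pow, zpow_neg]
      norm_cast

theorem genElem_linInd {F : Type*} [Field F] [Algebra ℂ F] (n : ℕ) (z : Fin n → F)
    (hz : AlgebraicIndependent ℂ z) : LinearIndependent ℂ (genElem z) := by
  induction n with
  | zero =>
    haveI : Unique (BasisIdx 0) := inferInstanceAs (Unique (∀ j : Fin 0, _))
    rw [linearIndependent_unique_iff]
    simp [genElem]
  | succ n ih =>
    have hz' : AlgebraicIndependent ℂ (fun i : Fin n => z i.castSucc) :=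
      hz.comp _ (Fin.castSucc_injective n)
    have h1 := ih _ hz'
    let K := IntermediateField.adjoin ℂ (z '' (Set.range Fin.castSucc))
    have hmem : ∀ i : Fin n, z i.castSucc ∈ K := fun i =>
      IntermediateField.subset_adjoin _ _ ⟨_, ⟨i, rfl⟩, rfl⟩
    have htr : Transcendental K (z (Fin.last n)) := by
      rw [IntermediateField.transcendental_adjoin_iff]
      refine hz.transcendental_adjoin ?_
      rintro ⟨i, hi⟩
      exact (Fin.castSucc_lt_last i).ne hi
    have h2 := stepFam_linInd (K := K) (fun i : Fin n => ⟨z i.castSucc, hmem i⟩)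
      (fun i j hij => hz'.injective (congrArg Subtype.val hij)) _ htr
    have hgm : ∀ b, genElem (fun i : Fin n => z i.castSucc) b ∈ K := by
      intro b
      refine prod_mem fun j _ => ?_
      rcases b j with l | p
      · exact pow_mem (hmem j) _
      · exact zpow_mem (sub_mem (hmem _) (hmem _)) _
    have h3 : LinearIndependent ℂ
        (fun b => (⟨genElem (fun i : Fin n => z i.castSucc) b, hgm b⟩ : K)) :=
      LinearIndependent.of_comp K.val.toLinearMap h1
    have h4 := linearIndependent_smul h3 h2
    choose s hs using upIdx_surj (n := n)
    have hinj : Function.Injective s := fun c c' h => by rw [← hs c, ← hs c', h]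
    convert h4.comp s hinj using 1
    funext c
    conv_lhs => rw [← hs c, genElem_upIdx]
    rfl

/-- Generic version of `LocalFn`. -/
noncomputable def genLoc {F : Type*} [Field F] [Algebra ℂ F] {n : ℕ} (z : Fin n → F) :
    Subalgebra ℂ F :=
  Algebra.adjoin ℂ
    (Set.range z ∪ {x | ∃ i j : Fin n, i ≠ j ∧ x = (z i - z j)⁻¹})

theorem step_mul_x {F : Type*} [Field F] (A : Subring F) {n : ℕ} (a : Fin n → F) (x : F)
    (ha : ∀ i, a i ∈ A) (hx : ∀ i, x - a i ≠ 0) (d : ℕ ⊕ Fin n × ℕ) :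
    x * stepFam a x d ∈ Submodule.span A (Set.range (stepFam a x)) := by
  have hsub : ∀ d, stepFam a x d ∈ Submodule.span A (Set.range (stepFam a x)) :=
    fun d => Submodule.subset_span ⟨d, rfl⟩
  rcases d with l | ⟨i, m⟩
  · have := hsub (Sum.inl (l + 1))
    simpa [stepFam, pow_succ'] using this
  · have e : x * stepFam a x (Sum.inr (i, m)) =
        ((x - a i)⁻¹) ^ m + a i * stepFam a x (Sum.inr (i, m)) := by
      have := hx i
      simp only [stepFam, pow_succ]
      field_simp
      ring
    rw [e]
    refine add_mem ?_ (Submodule.smul_mem _ (⟨a i, ha i⟩ : A) (hsub _))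
    rcases m with _ | m
    · simpa [stepFam] using hsub (Sum.inl 0)
    · exact hsub (Sum.inr (i, m))

theorem step_mul_inv {F : Type*} [Field F] (A : Subring F) {n : ℕ} (a : Fin n → F) (x : F)
    (ha : ∀ i, a i ∈ A) (ha' : ∀ i j, i ≠ j → (a i - a j)⁻¹ ∈ A)
    (ha'' : ∀ i j, i ≠ j → a i - a j ≠ 0) (hx : ∀ i, x - a i ≠ 0) (i : Fin n)
    (d : ℕ ⊕ Fin n × ℕ) :
    (x - a i)⁻¹ * stepFam a x d ∈ Submodule.span A (Set.range (stepFam a x)) := by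
  have hsub : ∀ d, stepFam a x d ∈ Submodule.span A (Set.range (stepFam a x)) :=
    fun d => Submodule.subset_span ⟨d, rfl⟩
  have hi := hx i
  have h0 : (x - a i)⁻¹ ∈ Submodule.span A (Set.range (stepFam a x)) := by
    simpa [stepFam] using hsub (Sum.inr (i, 0))
  rcases d with l | ⟨j, m⟩
  · induction l with
    | zero => simpa [stepFam] using h0
    | succ l ih =>
      have e : (x - a i)⁻¹ * stepFam a x (Sum.inl (l + 1)) =
          stepFam a x (Sum.inl l) + a i * ((x - a i)⁻¹ * stepFam a x (Sum.inl l)) := by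
        simp only [stepFam, pow_succ]
        field_simp
        ring
      rw [e]
      exact add_mem (hsub _) (Submodule.smul_mem _ (⟨a i, ha i⟩ : A) ih)
  · by_cases hij : i = j
    · subst hij
      have := hsub (Sum.inr (i, m + 1))
      simpa only [stepFam, pow_succ' _ (m + 1)] using this
    · have hj := hx j
      have hd := ha'' i j hij
      have e : (x - a i)⁻¹ * stepFam a x (Sum.inr (j, m)) =
          (a i - a j)⁻¹ * ((x - a i)⁻¹ * ((x - a j)⁻¹) ^ m - stepFam a x (Sum.inr (j, m))) := by
        simp only [stepFam, pow_succ]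
        field_simp
        ring
      rw [e]
      refine Submodule.smul_mem _ (⟨(a i - a j)⁻¹, ha' i j hij⟩ : A) (sub_mem ?_ (hsub _))
      clear e
      induction m with
      | zero => simpa using h0
      | succ m ih =>
        have e : (x - a i)⁻¹ * ((x - a j)⁻¹) ^ (m + 1) =
            (a i - a j)⁻¹ * ((x - a i)⁻¹ * ((x - a j)⁻¹) ^ m - stepFam a x (Sum.inr (j, m))) := by
          simp only [stepFam, pow_succ]
          field_simp
          ring
        rw [e]
        exact Submodule.smul_mem _ (⟨(a i - a j)⁻¹, ha' i j hij⟩ : A) (sub_mem ih (hsub _))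

theorem genElem_mem {F : Type*} [Field F] [Algebra ℂ F] {n : ℕ} (z : Fin n → F)
    (c : BasisIdx n) : genElem z c ∈ genLoc z := by
  refine prod_mem fun j _ => ?_
  rcases c j with l | p
  · have h : z j ∈ genLoc z := Algebra.subset_adjoin (Or.inl ⟨j, rfl⟩)
    exact pow_mem h _
  · have h : (z j - z p.1.1)⁻¹ ∈ genLoc z :=
      Algebra.subset_adjoin (Or.inr ⟨j, p.1.1, p.2.ne', rfl⟩)
    have h2 := pow_mem h (p.1.2 + 1)
    simp only [Sum.elim_inr]
    rw [zpow_neg]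
    rw [inv_pow] at h2
    exact_mod_cast h2

theorem genLoc_le {F : Type*} [Field F] [Algebra ℂ F] (n : ℕ) (z : Fin n → F)
    (hz : Function.Injective z) :
    Subalgebra.toSubmodule (genLoc z) ≤ Submodule.span ℂ (Set.range (genElem z)) := by
  induction n with
  | zero =>
    have h : genLoc z = ⊥ := by
      rw [genLoc, ← Algebra.adjoin_empty]
      congr 1
      ext x
      simp
    rw [h, Algebra.toSubmodule_bot, Submodule.one_eq_span]
    refine Submodule.span_mono ?_
    rintro _ rfl
    exact ⟨fun j => j.elim0, by simp [genElem]⟩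
  | succ n ih =>
    have hz' : Function.Injective (fun i : Fin n => z i.castSucc) :=
      hz.comp (Fin.castSucc_injective n)
    have h1 := ih _ hz'
    set a : Fin n → F := fun i => z i.castSucc with ha_def
    set x := z (Fin.last n) with hx_def
    let A : Subring F := (genLoc a).toSubring
    have ha : ∀ i, a i ∈ A := fun i => Algebra.subset_adjoin (Or.inl ⟨i, rfl⟩)
    have ha' : ∀ i j, i ≠ j → (a i - a j)⁻¹ ∈ A :=
      fun i j h => Algebra.subset_adjoin (Or.inr ⟨i, j, h, rfl⟩)
    have ha'' : ∀ i j, i ≠ j → a i - a j ≠ 0 := fun i j h => sub_ne_zero.mpr (hz'.ne h)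
    have hx : ∀ i, x - a i ≠ 0 := fun i => sub_ne_zero.mpr (hz.ne (Fin.castSucc_lt_last i).ne')
    let M : Submodule A F := Submodule.span A (Set.range (stepFam a x))
    -- multiplication by generators preserves `M`
    have mulM : ∀ u : F, (∀ d, u * stepFam a x d ∈ M) → ∀ v ∈ M, u * v ∈ M := by
      intro u hu v hv
      refine Submodule.span_induction ?_ ?_ ?_ ?_ hv
      · rintro _ ⟨d, rfl⟩; exact hu d
      · rw [mul_zero]; exact zero_mem _
      · intro v w _ _ h h'; rw [mul_add]; exact add_mem h h'
      · intro r v _ h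
        have : u * (r • v) = r • (u * v) := by
          rw [Subring.smul_def, Subring.smul_def, smul_eq_mul, smul_eq_mul]; ring
        rw [this]; exact Submodule.smul_mem _ _ h
    have mulA : ∀ u ∈ A, ∀ v ∈ M, u * v ∈ M :=
      fun u hu v hv => Submodule.smul_mem _ (⟨u, hu⟩ : A) hv
    have mulX : ∀ v ∈ M, x * v ∈ M := mulM x (step_mul_x A a x ha hx)
    have mulI : ∀ i, ∀ v ∈ M, (x - a i)⁻¹ * v ∈ M :=
      fun i => mulM _ (step_mul_inv A a x ha ha' ha'' hx i)
    have one_M : (1 : F) ∈ M := by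
      have : stepFam a x (Sum.inl 0) ∈ M := Submodule.subset_span ⟨_, rfl⟩
      simpa [stepFam] using this
    have hgen : ∀ u ∈ (Set.range z ∪ {x | ∃ i j : Fin (n + 1), i ≠ j ∧ x = (z i - z j)⁻¹}),
        ∀ v ∈ M, u * v ∈ M := by
      rintro u (⟨i, rfl⟩ | ⟨i, j, hij, rfl⟩)
      · refine Fin.lastCases ?_ (fun i => ?_) i
        · exact mulX
        · exact mulA _ (ha i)
      · revert hij
        refine Fin.lastCases ?_ (fun i => ?_) i <;> refine Fin.lastCases ?_ (fun j => ?_) j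
        · exact fun h => absurd rfl h
        · exact fun _ => mulI j
        · intro _ v hv
          have : (z i.castSucc - z (Fin.last n))⁻¹ * v = -((x - a i)⁻¹ * v) := by
            rw [← neg_sub, inv_neg, neg_mul]
          rw [this]; exact neg_mem (mulI i v hv)
        · intro h
          exact mulA _ (ha' i j (fun h' => h (by rw [h'])))
    have hall : ∀ u ∈ genLoc z, ∀ v ∈ M, u * v ∈ M := by
      intro u hu
      refine Algebra.adjoin_induction hgen ?_ ?_ ?_ hu
      · exact fun r => mulA _ (algebraMap_mem (genLoc a) r)
      · intro u w _ _ h h' v hv; rw [add_mul]; exact add_mem (h v hv) (h' v hv)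
      · intro u w _ _ h h' v hv; rw [mul_assoc]; exact h _ (h' v hv)
    intro u hu
    have huM : u ∈ M := by simpa using hall u hu 1 one_M
    refine Submodule.span_induction (p := fun v _ => ∀ w ∈ genLoc a,
      w * v ∈ Submodule.span ℂ (Set.range (genElem z))) ?_ ?_ ?_ ?_ huM 1 (one_mem _) |> fun h => by
        simpa using h
    · rintro _ ⟨d, rfl⟩ w hw
      refine Submodule.span_induction (p := fun w _ =>
        w * stepFam a x d ∈ Submodule.span ℂ (Set.range (genElem z))) ?_ ?_ ?_ ?_ (h1 hw)
      · rintro _ ⟨b, rfl⟩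
        exact Submodule.subset_span ⟨upIdx b d, genElem_upIdx z b d⟩
      · rw [zero_mul]; exact zero_mem _
      · intro v w _ _ h h'; rw [add_mul]; exact add_mem h h'
      · intro r v _ h; rw [smul_mul_assoc]; exact Submodule.smul_mem _ _ h
    · intro w _; rw [mul_zero]; exact zero_mem _
    · intro v v' _ _ h h' w hw; rw [mul_add]; exact add_mem (h w hw) (h' w hw)
    · intro r v _ h w hw
      have : w * (r • v) = (w * r) * v := by
        rw [Subring.smul_def, smul_eq_mul]; ring
      rw [this]; exact h _ (mul_mem hw r.2)

theorem Zvar_algInd (n : ℕ) : AlgebraicIndependent ℂ (Zvar n) := by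
  have h := (MvPolynomial.algebraicIndependent_X (Fin n) ℂ).map'
    (f := IsScalarTower.toAlgHom ℂ (MvPolynomial (Fin n) ℂ) (RatField n))
    (IsFractionRing.injective (MvPolynomial (Fin n) ℂ) (RatField n))
  exact h

/-- for every `n ≥ 0`, the family `basisElem n` is a ℂ-vector-space basis
of `L_n`: it is linearly independent and spans exactly `L_n`. -/
theorem localFn_basis (n : ℕ) :
    LinearIndependent ℂ (basisElem n) ∧
      Submodule.span ℂ (Set.range (basisElem n)) = Subalgebra.toSubmodule (LocalFn n) := by
  refine ⟨genElem_linInd n (Zvar n) (Zvar_algInd n), le_antisymm ?_ ?_⟩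
  · rw [Submodule.span_le]
    rintro _ ⟨c, rfl⟩
    exact genElem_mem (Zvar n) c
  · exact genLoc_le n (Zvar n) (Zvar_algInd n).injective
end

section
/- In a uniform ℤ-graded vertex algebra V, for all a, b ∈ V and all n ∈ ℤ one has (L_{−1}a)(n)b = −n · a(n−1)b; equivalently, the field of L_{−1}a is the formal z-derivative of the field of a. -/
/-- A uniform ℤ-graded vertex algebra: a ℤ-graded complex vector space with bilinear
products `a(n)b`, a translation operator `L₋₁`, and a vacuum `1`, satisfying uniform
locality, translation covariance, the vacuum-field axiom and the creation axiom. -/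
structure UniformVertexAlgebra (V : Type*) [AddCommGroup V] [Module ℂ V] where
  /-- The grading `V = ⊕_{n ∈ ℤ} V_n`. -/
  grading : ℤ → Submodule ℂ V
  /-- The grading is an (internal) direct sum decomposition of `V`. -/
  decomposition : DirectSum.Decomposition grading
  /-- The bilinear products: `mul n a b` is `a(n)b`. -/
  mul : ℤ → V →ₗ[ℂ] V →ₗ[ℂ] V
  /-- The translation operator `L₋₁`. -/
  T : V →ₗ[ℂ] V
  /-- The vacuum vector `1`. -/
  vac : V
  vac_mem : vac ∈ grading 0
  /-- `a(n)` maps `V_m` into `V_{m−n+k−1}` whenever `a ∈ V_k`. -/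
  mul_mem : ∀ (n k m : ℤ) (a c : V), a ∈ grading k → c ∈ grading m →
    mul n a c ∈ grading (m - n + k - 1)
  /-- `L₋₁` has degree one. -/
  T_mem : ∀ (n : ℤ) (a : V), a ∈ grading n → T a ∈ grading (n + 1)
  /-- Uniform locality, in coefficient form: `(z−t)^N [a(z), b(t)] = 0`. -/
  locality : ∀ a b : V, ∃ N : ℕ, ∀ (p q : ℤ) (c : V),
    ∑ r ∈ Finset.range (N + 1),
      ((-1 : ℂ) ^ r * (N.choose r : ℂ)) •
        (mul (p + N - r) a (mul (q + r) b c) - mul (q + r) b (mul (p + N - r) a c)) = 0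
  /-- Translation covariance: `[L₋₁, a(n)] = −n·a(n−1)`. -/
  translation : ∀ (n : ℤ) (a c : V),
    T (mul n a c) - mul n a (T c) = -(n • mul (n - 1) a c)
  T_vac : T vac = 0
  /-- Vacuum field: `1(n)c = c` if `n = −1` and `0` otherwise. -/
  vac_field : ∀ (n : ℤ) (c : V), mul n vac c = if n = -1 then c else 0
  /-- Creation: `a(n)1 = 0` for `n ≥ 0`. -/
  creation : ∀ (n : ℤ) (a : V), 0 ≤ n → mul n a vac = 0
  /-- Creation: `a(−1)1 = a`. -/
  create_self : ∀ a : V, mul (-1) a vac = a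

/-- The locality statement for a pair `(a,b)` with a specific witness `N`. -/
def UniformVertexAlgebra.LocalityAt {V : Type*} [AddCommGroup V] [Module ℂ V]
    (A : UniformVertexAlgebra V) (a b : V) (N : ℕ) : Prop :=
  ∀ (p q : ℤ) (c : V),
    ∑ r ∈ Finset.range (N + 1),
      ((-1 : ℂ) ^ r * (N.choose r : ℂ)) •
        (A.mul (p + N - r) a (A.mul (q + r) b c) -
          A.mul (q + r) b (A.mul (p + N - r) a c)) = 0

namespace UVAaux

variable {V : Type*} [AddCommGroup V] [Module ℂ V]

/-- Shift in the first index. -/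
def SA : Module.End ℂ (ℤ → ℤ → V) where
  toFun f := fun p q => f (p + 1) q
  map_add' _ _ := rfl
  map_smul' _ _ := rfl

/-- Shift in the second index. -/
def SB : Module.End ℂ (ℤ → ℤ → V) where
  toFun f := fun p q => f p (q + 1)
  map_add' _ _ := rfl
  map_smul' _ _ := rfl

/-- Multiplication by `z - t`. -/
def D : Module.End ℂ (ℤ → ℤ → V) := (-1 : ℂ) • SB + SA

/-- Formal `z`-derivative. -/
def dz (f : ℤ → ℤ → V) : ℤ → ℤ → V := fun p q => -(p • f (p - 1) q)

theorem D_apply (f : ℤ → ℤ → V) (p q : ℤ) : D f p q = f (p + 1) q - f p (q + 1) := by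
  simp [D, SA, SB]; abel

theorem SA_pow (n : ℕ) (f : ℤ → ℤ → V) (p q : ℤ) : (SA ^ n) f p q = f (p + n) q := by
  induction n generalizing f with
  | zero => simp
  | succ n ih =>
    rw [pow_succ, Module.End.mul_apply, ih]
    simp [SA, add_assoc]

theorem SB_pow (n : ℕ) (f : ℤ → ℤ → V) (p q : ℤ) : (SB ^ n) f p q = f p (q + n) := by
  induction n generalizing f with
  | zero => simp
  | succ n ih =>
    rw [pow_succ, Module.End.mul_apply, ih]
    simp [SB, add_assoc]

theorem D_pow (N : ℕ) (f : ℤ → ℤ → V) (p q : ℤ) :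
    (D ^ N) f p q = ∑ r ∈ Finset.range (N + 1),
      ((-1 : ℂ) ^ r * (N.choose r : ℂ)) • f (p + N - r) (q + r) := by
  have hc : Commute ((-1 : ℂ) • SB : Module.End ℂ (ℤ → ℤ → V)) SA := by
    apply Commute.smul_left
    rfl
  rw [D, hc.add_pow, LinearMap.sum_apply, Finset.sum_apply, Finset.sum_apply]
  refine Finset.sum_congr rfl fun r hr => ?_
  have hr' : r ≤ N := by
    have := Finset.mem_range.mp hr
    omega
  have e : (((-1 : ℂ) • SB) ^ r * SA ^ (N - r) * ((N.choose r : ℕ) : Module.End ℂ (ℤ → ℤ → V)))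
      = ((-1 : ℂ) ^ r * (N.choose r : ℂ)) • (SB ^ r * SA ^ (N - r)) := by
    have h2 : ((N.choose r : ℕ) : Module.End ℂ (ℤ → ℤ → V)) = (N.choose r : ℂ) • 1 := by
      rw [← nsmul_one, Nat.cast_smul_eq_nsmul]
    rw [h2, smul_pow, smul_mul_assoc, smul_mul_assoc, mul_smul_comm, mul_one, smul_smul]
  rw [e, LinearMap.smul_apply, Pi.smul_apply, Pi.smul_apply, Module.End.mul_apply, SB_pow, SA_pow]
  congr 2
  push_cast [hr']
  ring

theorem D_dz (f : ℤ → ℤ → V) : D (dz f) = dz (D f) - f := by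
  funext p q
  simp only [D_apply, dz, Pi.sub_apply, add_sub_cancel_right, sub_add_cancel]
  module

theorem D_pow_dz (k : ℕ) (f : ℤ → ℤ → V) :
    (D ^ (k + 1)) (dz f) = dz ((D ^ (k + 1)) f) - (k + 1) • (D ^ k) f := by
  induction k generalizing f with
  | zero => simp [D_dz]
  | succ k ih =>
    rw [pow_succ, Module.End.mul_apply, D_dz, map_sub, ih,
      Module.End.mul_apply, ← Module.End.mul_apply (D ^ k) D f, ← pow_succ]
    module

theorem D_pow_raise {f : ℤ → ℤ → V} {N M : ℕ} (h : (D ^ N) f = 0) (hM : N ≤ M) :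
    (D ^ M) f = 0 := by
  obtain ⟨k, rfl⟩ := Nat.exists_eq_add_of_le' hM
  rw [pow_add, Module.End.mul_apply, h, map_zero]

theorem D_pow_top (M : ℕ) (g : ℤ → ℤ → V) (hg : ∀ p q, 0 ≤ q → g p q = 0) (p : ℤ) :
    (D ^ M) g p (-1) = g (p + M) (-1) := by
  induction M generalizing g with
  | zero => simp
  | succ M ih =>
    rw [pow_succ, Module.End.mul_apply, ih, D_apply, hg _ (-1 + 1) (by norm_num)]
    · simp [add_assoc]
    · intro p q hq
      rw [D_apply, hg _ _ hq, hg _ _ (by omega), sub_zero]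

theorem T_vac_mul (A : UniformVertexAlgebra V) (a : V) (n : ℤ) :
    A.T (A.mul n a A.vac) = -(n • A.mul (n - 1) a A.vac) := by
  have := A.translation n a A.vac
  rwa [A.T_vac, map_zero, sub_zero] at this

theorem T_left_vac (A : UniformVertexAlgebra V) (a : V) (n : ℤ) :
    A.mul n (A.T a) A.vac = A.T (A.mul n a A.vac) := by
  rcases le_or_gt 0 n with h | h
  · rw [A.creation _ _ h, A.creation _ _ h, map_zero]
  · obtain ⟨k, rfl⟩ : ∃ k : ℕ, n = -1 - k := ⟨(-1 - n).toNat, by omega⟩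
    clear h
    induction k with
    | zero => simp [A.create_self]
    | succ k ih =>
      have h1 := T_vac_mul A (A.T a) (-1 - k)
      rw [ih, T_vac_mul A a (-1 - k), map_neg, map_zsmul, neg_inj,
        ← Int.cast_smul_eq_zsmul ℂ, ← Int.cast_smul_eq_zsmul ℂ] at h1
      have h0 : ((-1 - k : ℤ) : ℂ) ≠ 0 := by
        rw [Int.cast_ne_zero]; omega
      have h2 := smul_right_injective V h0 h1
      rw [show (-1 - ((k + 1 : ℕ) : ℤ)) = -1 - k - 1 by push_cast; ring]
      exact h2.symm

/-- The commutator coefficients applied to the vacuum. -/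
def br (A : UniformVertexAlgebra V) (a b : V) : ℤ → ℤ → V := fun p q =>
  A.mul p a (A.mul q b A.vac) - A.mul q b (A.mul p a A.vac)

theorem br_local (A : UniformVertexAlgebra V) (a b : V) : ∃ N : ℕ, (D ^ N) (br A a b) = 0 := by
  obtain ⟨N, h⟩ := A.locality a b
  refine ⟨N, ?_⟩
  funext p q
  rw [D_pow]
  exact h p q A.vac

end UVAaux

open UVAaux

/-- `(L₋₁a)(n)b = −n · a(n−1)b`, i.e. the field of `L₋₁a` is the
formal derivative of the field of `a`. -/
theorem mul_T_left {V : Type*} [AddCommGroup V] [Module ℂ V]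
    (A : UniformVertexAlgebra V) (a b : V) (n : ℤ) :
    A.mul n (A.T a) b = -(n • A.mul (n - 1) a b) := by
  obtain ⟨N₁, h₁⟩ := br_local A (A.T a) b
  obtain ⟨N₂, h₂⟩ := br_local A a b
  have h₃ : (D ^ (N₂ + 1)) (dz (br A a b)) = 0 := by
    rw [D_pow_dz, h₂, D_pow_raise h₂ (Nat.le_succ _)]
    funext p q
    simp [dz]
  have hM : (D ^ (N₁ + (N₂ + 1))) (br A (A.T a) b - dz (br A a b)) = 0 := by
    rw [map_sub, D_pow_raise h₁ (Nat.le_add_right _ _), D_pow_raise h₃ (Nat.le_add_left _ _),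
      sub_zero]
  have hX : ∀ p q, (br A (A.T a) b - dz (br A a b)) p q =
      A.mul p (A.T a) (A.mul q b A.vac) + p • A.mul (p - 1) a (A.mul q b A.vac) := by
    intro p q
    simp only [Pi.sub_apply, br, dz, T_left_vac, T_vac_mul, map_neg, map_zsmul, smul_sub]
    abel
  have ht := D_pow_top (N₁ + (N₂ + 1)) (br A (A.T a) b - dz (br A a b)) (fun p q hq => by
    rw [hX, A.creation _ _ hq, map_zero, map_zero, smul_zero, add_zero])
    (n - (N₁ + (N₂ + 1) : ℕ))
  rw [hM, hX, A.create_self, sub_add_cancel] at ht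
  exact eq_neg_of_add_eq_zero_left ht.symm
end

section
/- In a uniform ℤ-graded vertex algebra V, for all a, b ∈ V and all n ∈ ℤ one has the Leibniz rule L_{−1}(a(n)b) = (L_{−1}a)(n)b + a(n)(L_{−1}b). -/
namespace UVA

variable {V : Type*} [AddCommGroup V] [Module ℂ V]

/-- Shift in the first index. -/
def X (V : Type*) [AddCommGroup V] [Module ℂ V] : Module.End ℂ (ℤ → ℤ → V) where
  toFun f := fun p q => f (p + 1) q
  map_add' _ _ := rfl
  map_smul' _ _ := rfl

/-- Shift in the second index. -/
def Y (V : Type*) [AddCommGroup V] [Module ℂ V] : Module.End ℂ (ℤ → ℤ → V) where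
  toFun f := fun p q => f p (q + 1)
  map_add' _ _ := rfl
  map_smul' _ _ := rfl

/-- The operator `f(p,q) ↦ p f(p-1,q)`. -/
def P (V : Type*) [AddCommGroup V] [Module ℂ V] : Module.End ℂ (ℤ → ℤ → V) where
  toFun f := fun p q => (p : ℂ) • f (p - 1) q
  map_add' _ _ := by funext p q; simp
  map_smul' _ _ := by funext p q; exact smul_comm _ _ _

/-- Multiplication by `z - t`. -/
def L (V : Type*) [AddCommGroup V] [Module ℂ V] : Module.End ℂ (ℤ → ℤ → V) :=
  (-1 : ℂ) • Y V + X V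

lemma L_apply (f : ℤ → ℤ → V) (p q : ℤ) : L V f p q = f (p + 1) q - f p (q + 1) := by
  simp [L, X, Y]; abel

lemma X_pow (k : ℕ) (f : ℤ → ℤ → V) (p q : ℤ) : (X V ^ k) f p q = f (p + k) q := by
  induction k generalizing f with
  | zero => simp
  | succ k ih =>
    rw [pow_succ, Module.End.mul_apply, ih]
    simp [X, add_assoc]

lemma Y_pow (k : ℕ) (f : ℤ → ℤ → V) (p q : ℤ) : (Y V ^ k) f p q = f p (q + k) := by
  induction k generalizing f with
  | zero => simp
  | succ k ih =>
    rw [pow_succ, Module.End.mul_apply, ih]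
    simp [Y, add_assoc]

lemma L_pow (N : ℕ) (f : ℤ → ℤ → V) (p q : ℤ) :
    (L V ^ N) f p q = ∑ r ∈ Finset.range (N + 1),
      ((-1 : ℂ) ^ r * (N.choose r : ℂ)) • f (p + N - r) (q + r) := by
  have hc : Commute ((-1 : ℂ) • Y V) (X V) :=
    Commute.smul_left (show Commute (Y V) (X V) from rfl) _
  rw [L, hc.add_pow, LinearMap.sum_apply, Finset.sum_apply, Finset.sum_apply]
  refine Finset.sum_congr rfl fun r hr => ?_
  have hr' : r ≤ N := by simpa [Nat.lt_succ_iff] using hr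
  have e : (((-1 : ℂ) • Y V) ^ r * X V ^ (N - r) * ((N.choose r : ℕ) : Module.End ℂ (ℤ → ℤ → V)))
      = ((-1 : ℂ) ^ r * (N.choose r : ℂ)) • (Y V ^ r * X V ^ (N - r)) := by
    have h2 : ((N.choose r : ℕ) : Module.End ℂ (ℤ → ℤ → V)) = (N.choose r : ℂ) • 1 := by
      rw [Nat.cast_smul_eq_nsmul, nsmul_one]
    rw [h2, smul_pow, mul_smul_comm, mul_one, smul_mul_assoc, smul_smul, mul_comm]
  rw [e]
  simp only [LinearMap.smul_apply, Pi.smul_apply, Module.End.mul_apply, Y_pow, X_pow]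
  congr 2
  push_cast [hr']
  ring

lemma LP : L V * P V = P V * L V + 1 := by
  ext f p q
  simp only [Module.End.mul_apply, LinearMap.add_apply, Pi.add_apply, L_apply, P,
    LinearMap.coe_mk, AddHom.coe_mk, Module.End.one_apply]
  rw [show p + 1 - 1 = p by ring, show p - 1 + 1 = p by ring]
  push_cast
  module

lemma LP_pow (N : ℕ) : L V ^ (N + 1) * P V = P V * L V ^ (N + 1) + (N + 1) • L V ^ N := by
  induction N with
  | zero => simpa using LP
  | succ N ih =>
    rw [pow_succ', mul_assoc, ih, mul_add, ← mul_assoc, LP, add_mul, one_mul,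
      mul_smul_comm, ← pow_succ', mul_assoc, ← pow_succ', add_assoc, succ_nsmul _ (N + 1)]
    congr 1
    abel

lemma L_pow_boundary (M : ℕ) (h : ℤ → ℤ → V) (h0 : ∀ p q, 0 ≤ q → h p q = 0) (p : ℤ) :
    (L V ^ M) h p (-1) = h (p + M) (-1) := by
  induction M generalizing h with
  | zero => simp
  | succ M ih =>
    rw [pow_succ, Module.End.mul_apply, ih, L_apply, h0 _ (-1 + 1) (by norm_num)]
    · simp [add_assoc]
    · intro p q hq
      rw [L_apply, h0 _ _ hq, h0 _ _ (by omega), sub_zero]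

lemma vac_case (A : UniformVertexAlgebra V) (a : V) (n : ℤ) :
    A.mul n (A.T a) A.vac + (n : ℂ) • A.mul (n - 1) a A.vac = 0 := by
  have tr : ∀ (m : ℤ) (x : V), A.T (A.mul m x A.vac) = -((m : ℂ) • A.mul (m - 1) x A.vac) := by
    intro m x
    have := A.translation m x A.vac
    rw [A.T_vac, map_zero, sub_zero] at this
    rw [this, Int.cast_smul_eq_zsmul]
  rcases lt_or_ge n 0 with hn | hn
  · obtain ⟨k, rfl⟩ : ∃ k : ℕ, n = -1 - k := ⟨(-1 - n).toNat, by omega⟩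
    clear hn
    induction k with
    | zero =>
      have := tr (-1) a
      rw [A.create_self] at this
      simp only [Nat.cast_zero, sub_zero]
      rw [A.create_self, this]
      simp
    | succ k ih =>
      have h := congrArg A.T ih
      rw [map_add, map_smul, tr, tr, map_zero] at h
      have hk : ((-1 - (k : ℤ) : ℤ) : ℂ) ≠ 0 := by
        exact_mod_cast (by omega : (-1 - (k : ℤ)) ≠ 0)
      have e : (-1 - ((k + 1 : ℕ) : ℤ)) = -1 - (k : ℤ) - 1 := by push_cast; ring
      rw [e]
      have h3 : ((-1 - (k : ℤ) : ℤ) : ℂ) •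
          (A.mul (-1 - (k : ℤ) - 1) (A.T a) A.vac +
            ((-1 - (k : ℤ) - 1 : ℤ) : ℂ) • A.mul (-1 - (k : ℤ) - 1 - 1) a A.vac) = 0 := by
        rw [smul_add, ← neg_eq_zero, neg_add, ← smul_neg _ (_ • _)]
        exact h
      exact (smul_eq_zero.mp h3).resolve_left hk
  · rw [A.creation n _ hn]
    rcases eq_or_lt_of_le hn with rfl | h
    · simp
    · rw [A.creation (n - 1) _ (by omega)]; simp

/-- Commutator coefficients on the vacuum. -/
def comm (A : UniformVertexAlgebra V) (a b : V) : ℤ → ℤ → V := fun p q =>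
  A.mul p a (A.mul q b A.vac) - A.mul q b (A.mul p a A.vac)

lemma comm_loc (A : UniformVertexAlgebra V) (a b : V) : ∃ N : ℕ, (L V ^ N) (comm A a b) = 0 := by
  obtain ⟨N, hN⟩ := A.locality a b
  refine ⟨N, ?_⟩
  funext p q
  rw [L_pow]
  exact hN p q A.vac

lemma key (A : UniformVertexAlgebra V) (a b : V) (n : ℤ) :
    A.mul n (A.T a) b + (n : ℂ) • A.mul (n - 1) a b = 0 := by
  obtain ⟨N, hN⟩ := comm_loc A a b
  obtain ⟨K, hK⟩ := comm_loc A (A.T a) b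
  set h := comm A (A.T a) b + P V (comm A a b) with hh
  have hv : ∀ p q, h p q = A.mul p (A.T a) (A.mul q b A.vac)
      + (p : ℂ) • A.mul (p - 1) a (A.mul q b A.vac) := by
    intro p q
    have e := congrArg (A.mul q b) (vac_case A a p)
    rw [map_add, map_smul, map_zero] at e
    simp only [hh, comm, P, Pi.add_apply, LinearMap.coe_mk, AddHom.coe_mk]
    rw [smul_sub, ← sub_eq_zero, ← neg_eq_zero, ← e]
    abel
  have hz : (L V ^ (K + (N + 1))) h = 0 := by
    have h1 : (L V ^ (N + 1)) (P V (comm A a b)) = 0 := by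
      rw [← Module.End.mul_apply, LP_pow, LinearMap.add_apply, Module.End.mul_apply,
        LinearMap.smul_apply, hN, pow_succ', Module.End.mul_apply, hN]
      simp
    have h2 : (L V ^ (K + (N + 1))) (comm A (A.T a) b) = 0 := by
      rw [add_comm, pow_add, Module.End.mul_apply, hK, map_zero]
    rw [hh, map_add, h2, pow_add, Module.End.mul_apply, h1, map_zero, add_zero]
  have hb := L_pow_boundary (K + (N + 1)) h (by
    intro p q hq
    rw [hv, A.creation q b hq]; simp) (n - (K + (N + 1) : ℕ))
  rw [hz, sub_add_cancel, hv, A.create_self] at hb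
  exact hb.symm

end UVA

/-- the Leibniz rule `L₋₁(a(n)b) = (L₋₁a)(n)b + a(n)(L₋₁b)`. -/
theorem T_leibniz {V : Type*} [AddCommGroup V] [Module ℂ V]
    (A : UniformVertexAlgebra V) (a b : V) (n : ℤ) :
    A.T (A.mul n a b) = A.mul n (A.T a) b + A.mul n a (A.T b) := by
  have h := UVA.key A a b n
  have t := A.translation n a b
  rw [Int.cast_smul_eq_zsmul] at h
  rw [sub_eq_iff_eq_add.mp t, eq_neg_of_add_eq_zero_left h]
end

section
/- In a uniform ℤ-graded vertex algebra V, the commutator formula holds: for all a, b, c ∈ V and all m, n ∈ ℤ, a(m)(b(n)c) − b(n)(a(m)c) = Σ_{i≥0} C(m, i) · (a(i)b)(m+n−i) c, where C(m, i) = m(m−1)⋯(m−i+1)/i! is the generalized binomial coefficient and only finitely many terms of the sum are nonzero. -/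
/-- The generalized binomial coefficient `C(m, i) = m(m−1)⋯(m−i+1)/i!` as a complex number. -/
noncomputable def gbinom (m : ℤ) (i : ℕ) : ℂ :=
  (∏ j ∈ Finset.range i, ((m : ℂ) - (j : ℂ))) / (i.factorial : ℂ)

namespace UVA

section shifts
variable {W : Type*} [AddCommGroup W] [Module ℂ W]

/-- The operator `z - t` on two-variable coefficient families. -/
def D : Module.End ℂ (ℤ → ℤ → W) where
  toFun f := fun m n => f (m + 1) n - f m (n + 1)
  map_add' f g := by
    funext m n; simp only [Pi.add_apply]; abel
  map_smul' c f := by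
    funext m n; simp only [Pi.smul_apply, RingHom.id_apply, smul_sub]

theorem D_apply (f : ℤ → ℤ → W) (m n : ℤ) : D f m n = f (m + 1) n - f m (n + 1) := rfl

theorem D_pow_succ (i : ℕ) (f : ℤ → ℤ → W) : (D ^ (i + 1)) f = D ((D ^ i) f) := by
  rw [pow_succ']; rfl

theorem D_pow_succ_right (i : ℕ) (f : ℤ → ℤ → W) : (D ^ (i + 1)) f = (D ^ i) (D f) := by
  rw [pow_succ]; rfl

theorem D_pow_map {W' : Type*} [AddCommGroup W'] [Module ℂ W'] (φ : W →ₗ[ℂ] W') (i : ℕ)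
    (f : ℤ → ℤ → W) : (D ^ i) (fun m n => φ (f m n)) = fun m n => φ ((D ^ i) f m n) := by
  induction i with
  | zero => rfl
  | succ i ih => rw [D_pow_succ, ih, D_pow_succ]; funext m n; simp [D_apply]

/-- Shift in the first variable. -/
def s1 : Module.End ℂ (ℤ → ℤ → W) where
  toFun f := fun m n => f (m + 1) n
  map_add' _ _ := rfl
  map_smul' _ _ := rfl

/-- Minus the shift in the second variable. -/
def s2 : Module.End ℂ (ℤ → ℤ → W) where
  toFun f := fun m n => - f m (n + 1)
  map_add' f g := by funext m n; simp only [Pi.add_apply]; abel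
  map_smul' c f := by funext m n; simp

theorem s1_pow (k : ℕ) (f : ℤ → ℤ → W) (m n : ℤ) : (s1 ^ k) f m n = f (m + k) n := by
  induction k generalizing m with
  | zero => simp
  | succ k ih =>
    rw [pow_succ']
    change (s1 ^ k) f (m + 1) n = _
    rw [ih]; congr 1; push_cast; ring

theorem s2_pow (k : ℕ) (f : ℤ → ℤ → W) (m n : ℤ) :
    (s2 ^ k) f m n = ((-1 : ℂ) ^ k) • f m (n + k) := by
  induction k generalizing n with
  | zero => simp
  | succ k ih =>
    rw [pow_succ']
    change - (s2 ^ k) f m (n + 1) = _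
    rw [ih, pow_succ, mul_neg_one, neg_smul]
    congr 3; push_cast; ring

theorem D_pow_formula (N : ℕ) (f : ℤ → ℤ → W) (p q : ℤ) :
    (D ^ N) f p q = ∑ r ∈ Finset.range (N + 1),
      ((-1 : ℂ) ^ r * (N.choose r : ℂ)) • f (p + N - r) (q + r) := by
  have hD : (D : Module.End ℂ (ℤ → ℤ → W)) = s2 + s1 := by
    ext f m n
    change f (m + 1) n - f m (n + 1) = - f m (n + 1) + f (m + 1) n
    abel
  have hc : Commute (s2 : Module.End ℂ (ℤ → ℤ → W)) s1 := by
    change _ = _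
    rfl
  rw [hD, hc.add_pow, LinearMap.sum_apply, Finset.sum_apply, Finset.sum_apply]
  refine Finset.sum_congr rfl fun r hr => ?_
  have hr' : r ≤ N := by simpa [Nat.lt_succ_iff] using hr
  rw [← nsmul_eq_mul', LinearMap.smul_apply, Pi.smul_apply, Pi.smul_apply]
  change N.choose r • (s2 ^ r) ((s1 ^ (N - r)) f) p q = _
  rw [s2_pow, s1_pow, ← Nat.cast_smul_eq_nsmul ℂ, smul_smul, mul_comm]
  congr 2
  rw [Nat.cast_sub hr']; ring

/-- Evaluation at the edge `n = -1`. -/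
theorem D_edge (m₀ : ℤ) (f : ℤ → ℤ → W) (hf : ∀ m n, m₀ ≤ m → 0 ≤ n → f m n = 0) (i : ℕ) :
    (∀ m n, m₀ ≤ m → 0 ≤ n → (D ^ i) f m n = 0) ∧
      ∀ m, m₀ ≤ m → (D ^ i) f m (-1) = f (m + i) (-1) := by
  induction i with
  | zero => exact ⟨hf, by simp⟩
  | succ i ih =>
    obtain ⟨h1, h2⟩ := ih
    refine ⟨fun m n hm hn => ?_, fun m hm => ?_⟩
    · rw [D_pow_succ, D_apply, h1 _ _ (by omega) hn, h1 _ _ hm (by omega), sub_zero]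
    · rw [D_pow_succ, D_apply, h1 _ (-1 + 1) hm (by omega), sub_zero, h2 _ (by omega)]
      congr 1; push_cast; ring

theorem gbinom_zero (m : ℤ) : gbinom m 0 = 1 := by simp [gbinom]

theorem gbinom_zero_succ (i : ℕ) : gbinom 0 (i + 1) = 0 := by
  simp [gbinom, Finset.prod_range_succ']

theorem gbinom_pascal (m : ℤ) (i : ℕ) :
    gbinom (m + 1) (i + 1) - gbinom m (i + 1) = gbinom m i := by
  unfold gbinom
  rw [Finset.prod_range_succ', Finset.prod_range_succ, Nat.factorial_succ]
  have h1 : ∏ k ∈ Finset.range i, (((m + 1 : ℤ) : ℂ) - ((k + 1 : ℕ) : ℂ))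
      = ∏ k ∈ Finset.range i, ((m : ℂ) - (k : ℂ)) :=
    Finset.prod_congr rfl fun k _ => by push_cast; ring
  rw [h1]
  have h2 : (i.factorial : ℂ) ≠ 0 := by exact_mod_cast i.factorial_ne_zero
  have h3 : (i : ℂ) + 1 ≠ 0 := by exact_mod_cast i.succ_ne_zero
  push_cast
  field_simp
  ring

theorem eq_zero_of_D (f : ℤ → ℤ → W) (h : D f = 0) (h0 : ∀ n, f 0 n = 0) : f = 0 := by
  have hs : ∀ m n, f (m + 1) n = f m (n + 1) := fun m n => by
    have := congrFun (congrFun h m) n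
    rw [D_apply] at this
    exact sub_eq_zero.mp this
  funext m
  induction m using Int.induction_on with
  | zero => funext n; exact h0 n
  | succ k ih => funext n; rw [hs, ih]; rfl
  | pred k ih =>
    funext n
    have := hs (-(k : ℤ) - 1) (n - 1)
    rw [sub_add_cancel, sub_add_cancel, ih] at this
    exact this.symm

theorem newton (N : ℕ) (g : ℤ → ℤ → W) (hg : (D ^ N) g = 0) (m n : ℤ) :
    g m n = ∑ i ∈ Finset.range N, gbinom m i • (D ^ i) g 0 (m + n - i) := by
  induction N generalizing g m n with
  | zero => simpa using congrFun (congrFun hg m) n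
  | succ N ih =>
    have ih' := ih (D g) (by rw [← D_pow_succ_right]; exact hg)
    let R : ℤ → ℤ → W := fun m n =>
      ∑ i ∈ Finset.range (N + 1), gbinom m i • (D ^ i) g 0 (m + n - i)
    have hR : D (g - R) = 0 := by
      rw [map_sub, sub_eq_zero]
      funext m n
      rw [ih' m n, D_apply]
      simp only [R]
      rw [← Finset.sum_sub_distrib, Finset.sum_range_succ']
      have e0 : m + 1 + n = m + (n + 1) := by ring
      simp only [gbinom_zero, e0, sub_self, add_zero, ← sub_smul, gbinom_pascal]
      refine Finset.sum_congr rfl fun i _ => ?_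
      rw [← D_pow_succ_right]
      congr 2; push_cast; ring
    have h0 : ∀ n, (g - R) 0 n = 0 := fun n => by
      simp only [Pi.sub_apply, R]
      rw [Finset.sum_range_succ']
      simp [gbinom_zero, gbinom_zero_succ]
    have := eq_zero_of_D _ hR h0
    exact congrFun (congrFun (sub_eq_zero.mp this) m) n

/-- The operator `z - t` on three-variable families. -/
def E12 : Module.End ℂ (ℤ → ℤ → ℤ → W) where
  toFun f := fun m n l => f (m + 1) n l - f m (n + 1) l
  map_add' f g := by funext m n l; simp only [Pi.add_apply]; abel
  map_smul' c f := by funext m n l; simp only [Pi.smul_apply, RingHom.id_apply, smul_sub]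

/-- The operator `z - w`. -/
def E13 : Module.End ℂ (ℤ → ℤ → ℤ → W) where
  toFun f := fun m n l => f (m + 1) n l - f m n (l + 1)
  map_add' f g := by funext m n l; simp only [Pi.add_apply]; abel
  map_smul' c f := by funext m n l; simp only [Pi.smul_apply, RingHom.id_apply, smul_sub]

/-- The operator `t - w`. -/
def E23 : Module.End ℂ (ℤ → ℤ → ℤ → W) where
  toFun f := fun m n l => f m (n + 1) l - f m n (l + 1)
  map_add' f g := by funext m n l; simp only [Pi.add_apply]; abel
  map_smul' c f := by funext m n l; simp only [Pi.smul_apply, RingHom.id_apply, smul_sub]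

theorem E12_pow (i : ℕ) (f : ℤ → ℤ → ℤ → W) (m n l : ℤ) :
    (E12 ^ i) f m n l = (D ^ i) (fun m n => f m n l) m n := by
  induction i generalizing m n with
  | zero => rfl
  | succ i ih =>
    rw [pow_succ', D_pow_succ, D_apply, ← ih, ← ih]; rfl

theorem E13_pow (i : ℕ) (f : ℤ → ℤ → ℤ → W) (m n l : ℤ) :
    (E13 ^ i) f m n l = (D ^ i) (fun m l => f m n l) m l := by
  induction i generalizing m l with
  | zero => rfl
  | succ i ih =>
    rw [pow_succ', D_pow_succ, D_apply, ← ih, ← ih]; rfl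

theorem E23_pow (i : ℕ) (f : ℤ → ℤ → ℤ → W) (m n l : ℤ) :
    (E23 ^ i) f m n l = (D ^ i) (f m) n l := by
  induction i generalizing n l with
  | zero => rfl
  | succ i ih =>
    rw [pow_succ', D_pow_succ, D_apply, ← ih, ← ih]; rfl

theorem comm_23_12 : Commute (E23 : Module.End ℂ (ℤ → ℤ → ℤ → W)) E12 := by
  refine LinearMap.ext fun f => ?_
  funext m n l
  change (f (m+1) (n+1) l - f m (n+1+1) l) - (f (m+1) n (l+1) - f m (n+1) (l+1)) =
    (f (m+1) (n+1) l - f (m+1) n (l+1)) - (f m (n+1+1) l - f m (n+1) (l+1))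
  abel

theorem comm_23_13 : Commute (E23 : Module.End ℂ (ℤ → ℤ → ℤ → W)) E13 := by
  refine LinearMap.ext fun f => ?_
  funext m n l
  change (f (m+1) (n+1) l - f m (n+1) (l+1)) - (f (m+1) n (l+1) - f m n (l+1+1)) =
    (f (m+1) (n+1) l - f (m+1) n (l+1)) - (f m (n+1) (l+1) - f m n (l+1+1))
  abel

theorem comm_13_12 : Commute (E13 : Module.End ℂ (ℤ → ℤ → ℤ → W)) E12 := by
  have h : (E12 : Module.End ℂ (ℤ → ℤ → ℤ → W)) = E13 - E23 := by
    refine LinearMap.ext fun f => ?_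
    funext m n l
    change _ = (f (m+1) n l - f m n (l+1)) - (f m (n+1) l - f m n (l+1))
    change f (m+1) n l - f m (n+1) l = _
    abel
  rw [h]
  exact (Commute.refl _).sub_right comm_23_13.symm

theorem E23_eq : (E23 : Module.End ℂ (ℤ → ℤ → ℤ → W)) = E13 + -E12 := by
  refine LinearMap.ext fun f => ?_
  funext m n l
  change _ = (f (m+1) n l - f m n (l+1)) + -(f (m+1) n l - f m (n+1) l)
  change f m (n+1) l - f m n (l+1) = _
  abel

theorem pow_kill {M : Type*} [AddCommGroup M] [Module ℂ M] (x y : Module.End ℂ M)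
    (h : Commute x y) (a b : ℕ) (f : M) (hx : (x ^ a) f = 0) (hy : (y ^ b) f = 0) :
    ((x + y) ^ (a + b)) f = 0 := by
  rw [h.add_pow, LinearMap.sum_apply]
  refine Finset.sum_eq_zero fun r hr => ?_
  rw [← nsmul_eq_mul', LinearMap.smul_apply]
  suffices (x ^ r * y ^ (a + b - r)) f = 0 by rw [this, smul_zero]
  by_cases hra : a ≤ r
  · rw [(h.pow_pow r (a + b - r)).eq, ← Nat.sub_add_cancel hra, pow_add x]
    simp only [Module.End.mul_apply, hx, map_zero]
  · have : a + b - r = (a - r) + b := by omega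
    rw [this, pow_add y]
    simp only [Module.End.mul_apply, hy, map_zero]

theorem neg_kill {M : Type*} [AddCommGroup M] [Module ℂ M] (x : Module.End ℂ M)
    (n : ℕ) (f : M) (hx : (x ^ n) f = 0) : ((-x) ^ n) f = 0 := by
  rw [neg_pow, Module.End.mul_apply, hx, map_zero]

theorem D_pow_of_le (f : ℤ → ℤ → W) {N M : ℕ} (h : N ≤ M) (hf : (D ^ N) f = 0) :
    (D ^ M) f = 0 := by
  rw [← Nat.sub_add_cancel h, pow_add, Module.End.mul_apply, hf, map_zero]

end shifts

section fields
variable {V : Type*} [AddCommGroup V] [Module ℂ V]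

/-- The commutator of two families of operators. -/
def br (F G : ℤ → Module.End ℂ V) : ℤ → ℤ → Module.End ℂ V :=
  fun m n => F m * G n - G n * F m

/-- Right commutator as a linear map. -/
def adR (C : Module.End ℂ V) : Module.End ℂ V →ₗ[ℂ] Module.End ℂ V where
  toFun x := x * C - C * x
  map_add' x y := by noncomm_ring
  map_smul' c x := by simp [smul_sub]

theorem dong (F G H : ℤ → Module.End ℂ V) (N0 N1 N2 : ℕ) (h0 : (D ^ N0) (br F G) = 0)
    (h1 : (D ^ N1) (br F H) = 0) (h2 : (D ^ N2) (br G H) = 0) (i : ℕ) :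
    (D ^ (N1 + N0 + N2)) (br (fun k => (D ^ i) (br F G) 0 k) H) = 0 := by
  let K : ℤ → ℤ → ℤ → Module.End ℂ V := fun m n l => adR (H l) (br F G m n)
  let P : ℤ → ℤ → ℤ → Module.End ℂ V := fun m n l => -adR (F m) (br G H n l)
  let Q : ℤ → ℤ → ℤ → Module.End ℂ V := fun m n l => -adR (G n) (br F H m l)
  have hK : K = P - Q := by
    funext m n l
    change (F m * G n - G n * F m) * H l - H l * (F m * G n - G n * F m) =
      -((G n * H l - H l * G n) * F m - F m * (G n * H l - H l * G n)) -
      -((F m * H l - H l * F m) * G n - G n * (F m * H l - H l * F m))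
    noncomm_ring
  have kK : (E12 ^ N0) K = 0 := by
    funext m n l
    rw [E12_pow]
    simp only [K]
    rw [D_pow_map, h0]; simp
  have kP : (E23 ^ N2) P = 0 := by
    funext m n l
    rw [E23_pow]
    have := D_pow_map (-adR (F m)) N2 (br G H)
    simp only [LinearMap.neg_apply] at this
    simp only [P]
    rw [this, h2]; simp
  have kQ : (E13 ^ N1) Q = 0 := by
    funext m n l
    rw [E13_pow]
    have := D_pow_map (-adR (G n)) N1 (br F H)
    simp only [LinearMap.neg_apply] at this
    simp only [Q]
    rw [this, h1]; simp
  have key : (E23 ^ (N1 + N0 + N2)) K = 0 := by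
    rw [pow_add, Module.End.mul_apply, E23_eq]
    apply pow_kill _ _ (Commute.neg_right (comm_13_12 (W := Module.End ℂ V)))
    · rw [← E23_eq, hK, map_sub, kP, zero_sub, map_neg, ← Module.End.mul_apply,
        ← (comm_23_13.pow_pow N2 N1).eq, Module.End.mul_apply, kQ, map_zero, neg_zero]
    · apply neg_kill
      rw [← E23_eq, ← Module.End.mul_apply (E12 ^ N0),
        ← (comm_23_12.pow_pow N2 N0).eq, Module.End.mul_apply, kK, map_zero]
  have key2 : (E23 ^ (N1 + N0 + N2)) ((E12 ^ i) K) = 0 := by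
    rw [← Module.End.mul_apply, (comm_23_12.pow_pow _ i).eq, Module.End.mul_apply, key, map_zero]
  have key3 : (E12 ^ i) K 0 = br (fun k => (D ^ i) (br F G) 0 k) H := by
    funext n l
    rw [E12_pow]
    simp only [K]
    rw [D_pow_map]; rfl
  rw [← key3]
  funext n l
  rw [← E23_pow, key2]; rfl

/-- The family of modes of `a`. -/
def fld (A : UniformVertexAlgebra V) (a : V) : ℤ → Module.End ℂ V := fun m => A.mul m a

theorem loc (A : UniformVertexAlgebra V) (a b : V) :
    ∃ N : ℕ, (D ^ N) (br (fld A a) (fld A b)) = 0 := by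
  obtain ⟨N, hN⟩ := A.locality a b
  refine ⟨N, ?_⟩
  funext p q
  rw [D_pow_formula]
  refine LinearMap.ext fun c => ?_
  rw [LinearMap.sum_apply]
  exact hN p q c

/-- Evaluation at the vacuum. -/
def ev (c : V) : Module.End ℂ V →ₗ[ℂ] V := LinearMap.applyₗ c

theorem ev_apply (c : V) (x : Module.End ℂ V) : ev c x = x c := rfl

theorem goddard (A : UniformVertexAlgebra V) (F : ℤ → Module.End ℂ V)
    (hF : ∀ d, ∃ N : ℕ, (D ^ N) (br F (fld A d)) = 0)
    (h1 : ∀ m, F m A.vac = 0) (m : ℤ) : F m = 0 := by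
  refine LinearMap.ext fun d => ?_
  obtain ⟨N, hN⟩ := hF d
  have he : ∀ m n, ev A.vac (br F (fld A d) m n) = F m (A.mul n d A.vac) := fun m n => by
    change F m (A.mul n d A.vac) - A.mul n d (F m A.vac) = _
    rw [h1, map_zero, sub_zero]
  have h := (D_edge (m - N) (fun m n => ev A.vac (br F (fld A d) m n))
    (fun m n _ hn => by rw [he, A.creation n d hn, map_zero]) N).2 (m - N) le_rfl
  rw [D_pow_map, hN, he, A.create_self, sub_add_cancel] at h
  simpa using h.symm

theorem D_trans (A : UniformVertexAlgebra V) (a b : V) (i : ℕ) (m n : ℤ) (c : V) :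
    A.T ((D ^ i) (br (fld A a) (fld A b)) m n c) - (D ^ i) (br (fld A a) (fld A b)) m n (A.T c) =
      -(m • (D ^ i) (br (fld A a) (fld A b)) (m - 1) n c) -
        n • (D ^ i) (br (fld A a) (fld A b)) m (n - 1) c := by
  induction i generalizing m n with
  | zero =>
    have hT : ∀ (n : ℤ) (a c : V),
        A.T (A.mul n a c) = A.mul n a (A.T c) - n • A.mul (n - 1) a c := fun n a c => by
      rw [sub_eq_add_neg, ← A.translation]; abel
    change A.T (A.mul m a (A.mul n b c) - A.mul n b (A.mul m a c)) -
      (A.mul m a (A.mul n b (A.T c)) - A.mul n b (A.mul m a (A.T c))) =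
      -(m • (A.mul (m-1) a (A.mul n b c) - A.mul n b (A.mul (m-1) a c))) -
      n • (A.mul m a (A.mul (n-1) b c) - A.mul (n-1) b (A.mul m a c))
    simp only [map_sub, hT, map_zsmul, smul_sub]
    abel
  | succ i ih =>
    simp only [D_pow_succ, D_apply, LinearMap.sub_apply, map_sub]
    have e1 := ih (m + 1) n
    have e2 := ih m (n + 1)
    simp only [add_sub_cancel_right, sub_add_cancel] at e1 e2 ⊢
    generalize (D ^ i) (br (fld A a) (fld A b)) = f at *
    rw [sub_sub_sub_comm, e1, e2]
    simp only [add_smul, smul_sub, one_smul]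
    abel

theorem vac_zero (A : UniformVertexAlgebra V) (F : ℤ → V) (h0 : ∀ n, -1 ≤ n → F n = 0)
    (hT : ∀ n, A.T (F n) = -(n • F (n - 1))) (n : ℤ) : F n = 0 := by
  have key : ∀ k : ℕ, F (-1 - k) = 0 := fun k => by
    induction k with
    | zero => exact h0 _ (by simp)
    | succ k ih =>
      have := hT (-1 - k)
      rw [ih, map_zero, eq_comm, neg_eq_zero, ← Int.cast_smul_eq_zsmul ℂ, smul_eq_zero] at this
      rcases this with h | h
      · exfalso
        have : (-1 - (k : ℤ)) = 0 := by exact_mod_cast h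
        omega
      · rw [← h]; congr 1; push_cast; ring
  by_cases h : -1 ≤ n
  · exact h0 n h
  · have := key (-1 - n).toNat
    rw [Int.toNat_of_nonneg (by omega)] at this
    rw [← this]; congr 1; ring

theorem br_edge (A : UniformVertexAlgebra V) (a b : V) (i : ℕ) :
    (∀ m n, 0 ≤ m → 0 ≤ n → (D ^ i) (br (fld A a) (fld A b)) m n A.vac = 0) ∧
      ∀ m, 0 ≤ m → (D ^ i) (br (fld A a) (fld A b)) m (-1) A.vac = A.mul (m + i) a b := by
  have h := D_edge 0 (fun m n => ev A.vac (br (fld A a) (fld A b) m n)) (fun m n hm hn => by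
    change A.mul m a (A.mul n b A.vac) - A.mul n b (A.mul m a A.vac) = 0
    rw [A.creation n b hn, A.creation m a hm]; simp) i
  rw [D_pow_map] at h
  refine ⟨h.1, fun m hm => (h.2 m hm).trans ?_⟩
  change A.mul (m + i) a (A.mul (-1) b A.vac) - A.mul (-1) b (A.mul (m + i) a A.vac) = _
  rw [A.creation _ a (by omega), A.create_self]; simp

theorem coeff_eq (A : UniformVertexAlgebra V) (a b : V) (i : ℕ) (k : ℤ) :
    (D ^ i) (br (fld A a) (fld A b)) 0 k = fld A (A.mul i a b) k := by
  rw [← sub_eq_zero]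
  refine goddard A (fun k => (D ^ i) (br (fld A a) (fld A b)) 0 k - fld A (A.mul i a b) k)
    (fun d => ?_) (fun n => ?_) k
  · obtain ⟨N0, h0⟩ := loc A a b
    obtain ⟨N1, h1⟩ := loc A a d
    obtain ⟨N2, h2⟩ := loc A b d
    obtain ⟨N3, h3⟩ := loc A (A.mul i a b) d
    have h4 := dong _ _ _ N0 N1 N2 h0 h1 h2 i
    refine ⟨(N1 + N0 + N2) + N3, ?_⟩
    have : br (fun k => (D ^ i) (br (fld A a) (fld A b)) 0 k - fld A (A.mul i a b) k) (fld A d) =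
        br (fun k => (D ^ i) (br (fld A a) (fld A b)) 0 k) (fld A d) -
        br (fld A (A.mul i a b)) (fld A d) := by
      funext m n
      simp only [br, Pi.sub_apply]
      noncomm_ring
    rw [this, map_sub, D_pow_of_le _ (by omega) h4, D_pow_of_le _ (by omega) h3, sub_zero]
  · refine vac_zero A (fun n => ((D ^ i) (br (fld A a) (fld A b)) 0 n
      - fld A (A.mul i a b) n) A.vac) (fun n hn => ?_) (fun n => ?_) n
    · obtain ⟨e1, e2⟩ := br_edge A a b i
      rw [LinearMap.sub_apply]
      by_cases h : 0 ≤ n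
      · rw [e1 0 n le_rfl h, fld, A.creation _ _ h, sub_zero]
      · obtain rfl : n = -1 := by omega
        rw [e2 0 le_rfl, fld, A.create_self, zero_add, sub_self]
    · have t1 := D_trans A a b i 0 n A.vac
      have t2 := A.translation n (A.mul i a b) A.vac
      rw [A.T_vac, map_zero, sub_zero] at t1 t2
      simp only [LinearMap.sub_apply, map_sub, t1, fld, t2, zero_smul, smul_sub]
      abel

end fields

end UVA

/-- the commutator formula
`a(m)(b(n)c) − b(n)(a(m)c) = Σ_{i≥0} C(m,i) (a(i)b)(m+n−i)c`, with only finitely many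
nonzero terms. -/
theorem commutator_formula {V : Type*} [AddCommGroup V] [Module ℂ V]
    (A : UniformVertexAlgebra V) (a b c : V) (m n : ℤ) :
    ∃ M : ℕ, (∀ i : ℤ, (M : ℤ) < i → A.mul i a b = 0) ∧
      A.mul m a (A.mul n b c) - A.mul n b (A.mul m a c) =
        ∑ i ∈ Finset.range (M + 1),
          gbinom m i • A.mul (m + n - i) (A.mul i a b) c := by
  obtain ⟨N, hN⟩ := UVA.loc A a b
  refine ⟨N, fun i hi => ?_, ?_⟩
  · have h := (UVA.br_edge A a b N).2 (i - N) (by omega)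
    rw [hN, sub_add_cancel] at h
    exact h.symm
  · have h := UVA.newton (N + 1) _ (UVA.D_pow_of_le _ (Nat.le_succ N) hN) m n
    have h' := congrArg (fun x : Module.End ℂ V => x c) h
    simp only [UVA.coeff_eq, LinearMap.sum_apply] at h'
    exact h'
end

section
/- Let V be a nonzero uniform ℤ-graded vertex algebra with V_n = 0 for all n < k, where k ≤ 0. Call an element a ∈ V positive-saturating if for all r ≥ 0, all b_1,…,b_r ∈ V and all n_1,…,n_r ∈ ℤ, every homogeneous component of degree ≤ 0 of b_1(n_1)⋯b_r(n_r)a is zero. Let I ⊆ V be the linear span of all elements L_{−1}^{m}( b_1(n_1)⋯b_r(n_r) a ) with m ≥ 0, r ≥ 0, b_1,…,b_r ∈ V, n_1,…,n_r ∈ ℤ and a positive-saturating. Then: (1) L_{−1}I ⊆ I; (2) for every c ∈ V, every n ∈ ℤ and every u ∈ I, both c(n)u ∈ I and u(n)c ∈ I; (3) I is contained in the sum of the homogeneous components V_d with d > 0; in particular the vacuum 1 does not lie in I, so V/I ≠ 0. -/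
/-- Iterated application `b_1(n_1)⋯b_r(n_r)a`, the pairs `(b_i, n_i)` given as a list. -/
noncomputable def UniformVertexAlgebra.applyList {V : Type*} [AddCommGroup V] [Module ℂ V]
    (A : UniformVertexAlgebra V) (l : List (V × ℤ)) (a : V) : V :=
  l.foldr (fun p x => A.mul p.2 p.1 x) a

/-- `a` is positive-saturating: every homogeneous component of degree `≤ 0` of any
`b_1(n_1)⋯b_r(n_r)a` vanishes. -/
noncomputable def UniformVertexAlgebra.PosSat {V : Type*} [AddCommGroup V] [Module ℂ V]
    (A : UniformVertexAlgebra V) (a : V) : Prop :=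
  ∀ (l : List (V × ℤ)) (d : ℤ), d ≤ 0 →
    (A.decomposition.decompose' (A.applyList l a)) d = 0

/-- The linear span of all `L₋₁^m (b_1(n_1)⋯b_r(n_r) a)` with `a` positive-saturating. -/
noncomputable def UniformVertexAlgebra.maxPosIdeal {V : Type*} [AddCommGroup V] [Module ℂ V]
    (A : UniformVertexAlgebra V) : Submodule ℂ V :=
  Submodule.span ℂ
    {x : V | ∃ (m : ℕ) (l : List (V × ℤ)) (a : V),
      A.PosSat a ∧ x = (A.T ^ m) (A.applyList l a)}

namespace UniformVertexAlgebra

variable {V : Type*} [AddCommGroup V] [Module ℂ V] (A : UniformVertexAlgebra V)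

/-- The positive part of the grading. -/
def posPart : Submodule ℂ V := ⨆ d : ℤ, ⨆ _ : 0 < d, A.grading d

theorem mem_posPart_iff (x : V) :
    x ∈ A.posPart ↔ ∀ d : ℤ, d ≤ 0 → A.decomposition.decompose' x d = 0 := by
  letI := A.decomposition
  change _ ↔ ∀ d : ℤ, d ≤ 0 → DirectSum.decompose A.grading x d = 0
  constructor
  · intro hx d hd
    have key : A.posPart ≤
        LinearMap.ker ((DirectSum.component ℂ ℤ (fun i => A.grading i) d).comp
          (DirectSum.decomposeLinearEquiv A.grading).toLinearMap) := by
      refine iSup_le fun e => iSup_le fun he => fun y hy => ?_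
      rw [LinearMap.mem_ker]
      apply Subtype.ext
      have : e ≠ d := by omega
      exact DirectSum.decompose_of_mem_ne A.grading hy this
    have := key hx
    rw [LinearMap.mem_ker] at this
    exact this
  · intro h
    classical
    rw [← DirectSum.sum_support_decompose A.grading x]
    refine Submodule.sum_mem _ fun i hi => ?_
    by_cases h0 : 0 < i
    · exact Submodule.mem_iSup_of_mem i (Submodule.mem_iSup_of_mem h0 (Subtype.mem _))
    · rw [h i (by omega)]
      simp

theorem T_mem_posPart {x : V} (hx : x ∈ A.posPart) : A.T x ∈ A.posPart := by
  have key : A.posPart ≤ A.posPart.comap A.T := by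
    refine iSup_le fun e => iSup_le fun he => fun y hy => ?_
    exact Submodule.mem_iSup_of_mem (e + 1)
      (Submodule.mem_iSup_of_mem (by omega) (A.T_mem e y hy))
  exact key hx

theorem applyList_add (l : List (V × ℤ)) (x y : V) :
    A.applyList l (x + y) = A.applyList l x + A.applyList l y := by
  induction l with
  | nil => rfl
  | cons p l ih =>
    change A.mul p.2 p.1 (A.applyList l (x + y)) = _
    rw [ih, map_add]; rfl

theorem applyList_smul (l : List (V × ℤ)) (t : ℂ) (x : V) :
    A.applyList l (t • x) = t • A.applyList l x := by
  induction l with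
  | nil => rfl
  | cons p l ih =>
    change A.mul p.2 p.1 (A.applyList l (t • x)) = _
    rw [ih, map_smul]; rfl

theorem applyList_append (l l' : List (V × ℤ)) (x : V) :
    A.applyList (l ++ l') x = A.applyList l (A.applyList l' x) := by
  simp [applyList]

/-- The positive-saturating elements form a submodule. -/
def satSub : Submodule ℂ V where
  carrier := {a | ∀ l, A.applyList l a ∈ A.posPart}
  zero_mem' := fun l => by
    have := A.applyList_smul l 0 0
    rw [zero_smul, zero_smul] at this
    rw [this]; exact zero_mem _
  add_mem' := fun {a b} ha hb l => by
    rw [applyList_add]; exact add_mem (ha l) (hb l)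
  smul_mem' := fun t a ha l => by
    rw [applyList_smul]; exact Submodule.smul_mem _ _ (ha l)

theorem mem_satSub_iff (a : V) : a ∈ A.satSub ↔ A.PosSat a :=
  forall_congr' fun l => A.mem_posPart_iff (A.applyList l a)

theorem applyList_mem_satSub {a : V} (ha : a ∈ A.satSub) (l : List (V × ℤ)) :
    A.applyList l a ∈ A.satSub := fun l' => by
  rw [← applyList_append]; exact ha _

theorem mul_mem_satSub {a : V} (ha : a ∈ A.satSub) (n : ℤ) (c : V) :
    A.mul n c a ∈ A.satSub := A.applyList_mem_satSub ha [(c, n)]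

theorem T_mem_satSub {a : V} (ha : a ∈ A.satSub) : A.T a ∈ A.satSub := by
  intro l
  induction l using List.reverseRecOn generalizing a with
  | nil => exact A.T_mem_posPart (ha [])
  | append_singleton l p ih =>
    rw [applyList_append]
    have e : A.applyList [p] (A.T a)
        = A.T (A.mul p.2 p.1 a) + p.2 • A.mul (p.2 - 1) p.1 a := by
      have h := A.translation p.2 p.1 a
      change A.mul p.2 p.1 (A.T a) = _
      rw [sub_eq_iff_eq_add] at h
      rw [h]; abel
    rw [e, applyList_add]
    refine add_mem (ih (A.mul_mem_satSub ha _ _)) ?_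
    exact (zsmul_mem (A.mul_mem_satSub ha _ _) p.2 : _ ∈ A.satSub) l

theorem maxPosIdeal_eq : A.maxPosIdeal = A.satSub := by
  apply le_antisymm
  · refine Submodule.span_le.2 ?_
    rintro x ⟨m, l, a, ha, rfl⟩
    have h := A.applyList_mem_satSub ((A.mem_satSub_iff a).2 ha) l
    induction m with
    | zero => simpa using h
    | succ m ih =>
      rw [pow_succ']
      exact A.T_mem_satSub ih
  · intro a ha
    exact Submodule.subset_span ⟨0, [], a, (A.mem_satSub_iff a).1 ha, by simp [applyList]⟩

theorem mul_vac_mem_satSub {u : V} (hu : u ∈ A.satSub) (n : ℤ) :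
    A.mul n u A.vac ∈ A.satSub := by
  by_cases hn : 0 ≤ n
  · rw [A.creation n u hn]; exact zero_mem _
  obtain ⟨j, rfl⟩ : ∃ j : ℕ, n = -1 - j := ⟨(-1 - n).toNat, by omega⟩
  clear hn
  induction j with
  | zero => simpa [A.create_self] using hu
  | succ j ih =>
    have h := A.translation (-1 - j) u A.vac
    rw [A.T_vac, map_zero, sub_zero] at h
    have h2 := A.T_mem_satSub ih
    rw [h, neg_mem_iff, ← Int.cast_smul_eq_zsmul ℂ] at h2
    have hne : (((-1 - j : ℤ)) : ℂ) ≠ 0 := by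
      rw [Int.cast_ne_zero]; omega
    rw [Submodule.smul_mem_iff _ hne] at h2
    convert h2 using 3
    push_cast; ring

theorem mul_left_mem_satSub {u : V} (hu : u ∈ A.satSub) (n : ℤ) (c : V) :
    A.mul n u c ∈ A.satSub := by
  obtain ⟨N, hN⟩ := A.locality u c
  have h := hN (n - N) (-1) A.vac
  simp only [smul_sub, Finset.sum_sub_distrib] at h
  rw [sub_eq_zero] at h
  rw [Finset.sum_range_succ', Finset.sum_eq_zero] at h
  · have h3 : A.mul n u c = ∑ x ∈ Finset.range (N + 1), ((-1 : ℂ) ^ x * (N.choose x : ℂ)) •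
        A.mul (-1 + x) c (A.mul (n - N + N - x) u A.vac) := by
      rw [← h]; simp [A.create_self]
    rw [h3]
    exact Submodule.sum_mem _ fun r _ => Submodule.smul_mem _ _
      (A.mul_mem_satSub (A.mul_vac_mem_satSub hu _) _ _)
  · intro r _
    rw [A.creation (-1 + ((r + 1 : ℕ) : ℤ)) c (by push_cast; omega)]
    simp

end UniformVertexAlgebra

/-- for a nonzero `k`-connective uniform vertex algebra (`k ≤ 0`), the span `I`
of all `L₋₁^m(b_1(n_1)⋯b_r(n_r)a)` with `a` positive-saturating satisfies: (1) `L₋₁I ⊆ I`;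
(2) `I` is stable under `c(n)·` and `·(n)c` for all `c, n`; (3) `I` is contained in the sum of
the components `V_d` with `d > 0`; in particular `1 ∉ I`, so `V/I ≠ 0`. -/
theorem maxPosIdeal_properties {V : Type*} [AddCommGroup V] [Module ℂ V] [Nontrivial V]
    (A : UniformVertexAlgebra V) (k : ℤ) (hk : k ≤ 0)
    (hconn : ∀ n : ℤ, n < k → A.grading n = ⊥) :
    (∀ u ∈ A.maxPosIdeal, A.T u ∈ A.maxPosIdeal) ∧
    (∀ (c : V) (n : ℤ), ∀ u ∈ A.maxPosIdeal,
      A.mul n c u ∈ A.maxPosIdeal ∧ A.mul n u c ∈ A.maxPosIdeal) ∧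
    A.maxPosIdeal ≤ (⨆ d : ℤ, ⨆ _ : 0 < d, A.grading d) ∧
    A.vac ∉ A.maxPosIdeal ∧
    Nontrivial (V ⧸ A.maxPosIdeal) := by
  have hvac : A.vac ∉ A.maxPosIdeal := by
    rw [A.maxPosIdeal_eq]
    intro hv
    have h0 := (A.mem_posPart_iff _).1 (hv []) 0 le_rfl
    letI := A.decomposition
    have h1 : (DirectSum.decompose A.grading A.vac 0 : V) = A.vac :=
      DirectSum.decompose_of_mem_same A.grading A.vac_mem
    have h2 : A.vac = 0 := by
      rw [← h1]
      exact congrArg Subtype.val h0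
    obtain ⟨a, ha⟩ := exists_ne (0 : V)
    apply ha
    rw [← A.create_self a, h2, map_zero]
  refine ⟨?_, ?_, ?_, hvac, ?_⟩
  · rw [A.maxPosIdeal_eq]
    exact fun u hu => A.T_mem_satSub hu
  · rw [A.maxPosIdeal_eq]
    exact fun c n u hu => ⟨A.mul_mem_satSub hu n c, A.mul_left_mem_satSub hu n c⟩
  · rw [A.maxPosIdeal_eq]
    exact fun u hu => hu []
  · rw [Submodule.Quotient.nontrivial_iff]
    intro h
    exact hvac (h ▸ Submodule.mem_top)
end

section
/- Let V be a uniform ℤ-graded vertex algebra with V_n = 0 for all n below some fixed integer m₀, and let B ⊆ V be a set of homogeneous elements equipped with a total order ≤ such that: (i) V is spanned as a ℂ-vector space by the elements b_1(n_1)⋯b_r(n_r)1 with r ≥ 0, b_i ∈ B and n_i ∈ ℤ; (ii) for all a, b ∈ B with a ≤ b and all n ≥ 0, the element a(n)b lies in the linear span of {1} ∪ { L_{−1}^{j} c : c ∈ B, j ≥ 0 }. Then V is already spanned as a ℂ-vector space by the ordered monomials b_1(n_1)⋯b_r(n_r)1 with r ≥ 0, b_i ∈ B, 0 > n_1 ≥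 n_2 ≥ ⋯ ≥ n_r, and b_i ≥ b_{i+1} whenever n_i = n_{i+1}. -/
/-- Iterated application `b_1(n_1)⋯b_r(n_r)1` to the vacuum, for generators drawn from a
set `B ⊆ V`; the pairs `(b_i, n_i)` are given as a list. -/
noncomputable def UniformVertexAlgebra.monomial {V : Type*} [AddCommGroup V] [Module ℂ V]
    (A : UniformVertexAlgebra V) (B : Set V) (l : List (B × ℤ)) : V :=
  l.foldr (fun p x => A.mul p.2 (p.1 : V) x) A.vac

namespace VAProof

section Shift
variable {G H W WW : Type*} [AddCommGroup G] [AddCommGroup H] [AddCommGroup W] [Module ℂ W]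
  [AddCommGroup WW] [Module ℂ WW]

/-- Shift operator on functions. -/
def S (W : Type*) [AddCommGroup W] [Module ℂ W] (g : G) : Module.End ℂ (G → W) where
  toFun f := fun x => f (x + g)
  map_add' _ _ := rfl
  map_smul' _ _ := rfl

theorem S_apply (g : G) (f : G → W) (x : G) : S W g f x = f (x + g) := rfl

theorem S_comm (g h : G) : Commute (S W g) (S W h) := by
  refine LinearMap.ext fun f => funext fun x => ?_
  simp only [Module.End.mul_apply, S_apply]
  congr 1; abel

/-- Difference operator. -/
def D (W : Type*) [AddCommGroup W] [Module ℂ W] (u v : G) : Module.End ℂ (G → W) :=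
  S W u - S W v

theorem D_apply (u v : G) (f : G → W) (x : G) : D W u v f x = f (x + u) - f (x + v) := rfl

theorem D_comm (u v u' v' : G) : Commute (D W u v) (D W u' v') := by
  unfold D
  exact ((S_comm _ _).sub_right (S_comm _ _)).sub_left ((S_comm _ _).sub_right (S_comm _ _))

theorem S_pow (g : G) (n : ℕ) (f : G → W) (x : G) : ((S W g) ^ n) f x = f (x + n • g) := by
  induction n generalizing x with
  | zero => simp
  | succ n ih =>
    rw [pow_succ', Module.End.mul_apply, S_apply, ih, add_smul, one_smul]
    congr 1; abel

theorem D_pow (u v : G) (N : ℕ) (f : G → W) (x : G) :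
    ((D W u v) ^ N) f x = ∑ r ∈ Finset.range (N + 1),
      ((-1 : ℂ) ^ r * (N.choose r : ℂ)) • f (x + (N - r) • u + r • v) := by
  have h : Commute ((-1 : ℂ) • S W v) (S W u) := (S_comm v u).smul_left _
  have e : D W u v = (-1 : ℂ) • S W v + S W u := by unfold D; module
  rw [e, h.add_pow, LinearMap.sum_apply, Finset.sum_apply]
  refine Finset.sum_congr rfl fun r _ => ?_
  have e2 : ((-1 : ℂ) • S W v) ^ r * (S W u) ^ (N - r) * ((N.choose r : ℕ) : Module.End ℂ (G → W))
      = ((-1 : ℂ) ^ r * (N.choose r : ℂ)) • ((S W v) ^ r * (S W u) ^ (N - r)) := by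
    rw [← (Nat.cast_commute (N.choose r) _).eq, smul_pow, ← nsmul_eq_mul, smul_mul_assoc, mul_smul,
      ← Nat.cast_smul_eq_nsmul ℂ, smul_comm]
  rw [e2, LinearMap.smul_apply, Pi.smul_apply, Module.End.mul_apply, S_pow, S_pow]
  congr 2; abel

theorem pull (u v : G) (u' v' : H) (g : G → WW) (F : H → W) (x : G) (y : H) (L : W →ₗ[ℂ] WW)
    (h : ∀ r s : ℕ, g (x + r • u + s • v) = L (F (y + r • u' + s • v'))) (N : ℕ) :
    ((D WW u v) ^ N) g x = L (((D W u' v') ^ N) F y) := by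
  rw [D_pow, D_pow, map_sum]
  refine Finset.sum_congr rfl fun r _ => ?_
  rw [h, map_smul]

theorem pow_zero_of_le {M : Type*} [AddCommGroup M] [Module ℂ M] (X : Module.End ℂ M) (v : M)
    {n m : ℕ} (hnm : n ≤ m) (h : (X ^ n) v = 0) : (X ^ m) v = 0 := by
  obtain ⟨k, rfl⟩ := Nat.exists_eq_add_of_le hnm
  rw [add_comm, pow_add, Module.End.mul_apply, h, map_zero]

theorem add_pow_zero {M : Type*} [AddCommGroup M] [Module ℂ M] (X Y : Module.End ℂ M)
    (hXY : Commute X Y) : ∀ (k n m : ℕ) (v : M), n + m = k → (X ^ n) v = 0 → (Y ^ m) v = 0 →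
      ((X + Y) ^ k) v = 0 := by
  intro k
  induction k with
  | zero =>
    intro n m v h h1 h2
    obtain rfl : n = 0 := by omega
    simpa using h1
  | succ k ih =>
    intro n m v h h1 h2
    rcases n with _ | n
    · have : v = 0 := by simpa using h1
      simp [this]
    rcases m with _ | m
    · have : v = 0 := by simpa using h2
      simp [this]
    rw [pow_succ, Module.End.mul_apply, LinearMap.add_apply, map_add]
    rw [ih n (m + 1) (X v) (by omega), ih (n + 1) m (Y v) (by omega), add_zero]
    · rw [← Module.End.mul_apply, (hXY.symm.pow_right (n + 1)).symm.eq, Module.End.mul_apply, h1,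
        map_zero]
    · rwa [← Module.End.mul_apply, ← pow_succ]
    · rwa [← Module.End.mul_apply, ← pow_succ]
    · rw [← Module.End.mul_apply, (hXY.pow_right (m + 1)).symm.eq, Module.End.mul_apply, h2,
        map_zero]

end Shift

section Fields
variable {V : Type*} [AddCommGroup V] [Module ℂ V]

/-- commutator of two mode sequences -/
def br (a b : ℤ → Module.End ℂ V) : ℤ × ℤ → Module.End ℂ V :=
  fun x => a x.1 * b x.2 - b x.2 * a x.1

/-- multiplication by `z - t` -/
abbrev DD (W : Type*) [AddCommGroup W] [Module ℂ W] : Module.End ℂ (ℤ × ℤ → W) :=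
  D W ((1, 0) : ℤ × ℤ) (0, 1)

/-- mutual locality -/
def Loc (a b : ℤ → Module.End ℂ V) : Prop := ∃ N : ℕ, ((DD (Module.End ℂ V)) ^ N) (br a b) = 0

/-- `j`-th OPE coefficient -/
def prd (j : ℕ) (a b : ℤ → Module.End ℂ V) : ℤ → Module.End ℂ V :=
  fun n => ((DD (Module.End ℂ V)) ^ j) (br a b) (0, n)

theorem Loc.add {a b c : ℤ → Module.End ℂ V} (h : Loc a c) (h' : Loc b c) : Loc (a + b) c := by
  obtain ⟨N, h⟩ := h
  obtain ⟨M, h'⟩ := h'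
  refine ⟨max N M, ?_⟩
  have : br (a + b) c = br a c + br b c := by
    funext x; simp only [br, Pi.add_apply]; noncomm_ring
  rw [this, map_add, pow_zero_of_le _ _ (le_max_left N M) h,
    pow_zero_of_le _ _ (le_max_right N M) h', add_zero]

theorem Loc.neg {a c : ℤ → Module.End ℂ V} (h : Loc a c) : Loc (-a) c := by
  obtain ⟨N, h⟩ := h
  refine ⟨N, ?_⟩
  have : br (-a) c = - br a c := by
    funext x; simp only [br, Pi.neg_apply, Pi.neg_apply]; noncomm_ring
  rw [this, map_neg, h, neg_zero]

/-- `w ↦ [w, z]` -/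
def adr (z : Module.End ℂ V) : Module.End ℂ V →ₗ[ℂ] Module.End ℂ V :=
  LinearMap.mulRight ℂ z - LinearMap.mulLeft ℂ z

theorem adr_apply (z w : Module.End ℂ V) : adr z w = w * z - z * w := rfl

theorem dong (j : ℕ) {a b c : ℤ → Module.End ℂ V} (hab : Loc a b) (hac : Loc a c)
    (hbc : Loc b c) : Loc (prd j a b) c := by
  obtain ⟨N, hab⟩ := hab
  obtain ⟨Q, hac⟩ := hac
  obtain ⟨P, hbc⟩ := hbc
  let E := Module.End ℂ V
  let e1 : ℤ × ℤ × ℤ := (1, 0, 0)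
  let e2 : ℤ × ℤ × ℤ := (0, 1, 0)
  let e3 : ℤ × ℤ × ℤ := (0, 0, 1)
  let g : ℤ × ℤ × ℤ → E := fun x => adr (c x.2.2) (br a b (x.1, x.2.1))
  let g1 : ℤ × ℤ × ℤ → E := fun x => (-adr (a x.1)) (br b c (x.2.1, x.2.2))
  let g2 : ℤ × ℤ × ℤ → E := fun x => (-adr (b x.2.1)) (br a c (x.1, x.2.2))
  have hg : g = g1 - g2 := by
    funext x
    simp only [g, g1, g2, Pi.sub_apply, LinearMap.neg_apply, adr_apply, br]
    noncomm_ring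
  have pg : ∀ (k : ℕ) (x : ℤ × ℤ × ℤ), ((D E e1 e2) ^ k) g x
      = adr (c x.2.2) (((DD E) ^ k) (br a b) (x.1, x.2.1)) := by
    intro k x
    apply pull
    intro r s
    simp [g, e1, e2]
  have z1 : ((D E e1 e2) ^ N) g = 0 := by
    funext x
    rw [pg, hab]; simp
  have z2 : ((D E e2 e3) ^ P) g1 = 0 := by
    funext x
    rw [pull e2 e3 ((1, 0) : ℤ × ℤ) (0, 1) g1 (br b c) x (x.2.1, x.2.2) (-adr (a x.1)), hbc]
    · simp
    · intro r s
      simp [g1, e2, e3]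
  have z3 : ((D E e1 e3) ^ Q) g2 = 0 := by
    funext x
    rw [pull e1 e3 ((1, 0) : ℤ × ℤ) (0, 1) g2 (br a c) x (x.1, x.2.2) (-adr (b x.2.1)), hac]
    · simp
    · intro r s
      simp [g2, e1, e3]
  have cm : ∀ (u v u' v' : ℤ × ℤ × ℤ) (k l : ℕ) (f : ℤ × ℤ × ℤ → E),
      ((D E u v) ^ k) (((D E u' v') ^ l) f) = ((D E u' v') ^ l) (((D E u v) ^ k) f) := by
    intro u v u' v' k l f
    rw [← Module.End.mul_apply, ((D_comm u v u' v').pow_pow k l).eq, Module.End.mul_apply]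
  have z4 : ((D E e1 e3) ^ Q) (((D E e2 e3) ^ P) g) = 0 := by
    rw [hg, map_sub, map_sub, z2, cm, z3]; simp
  have z5 : (((-1 : ℂ) • D E e1 e2) ^ N) (((D E e2 e3) ^ P) g) = 0 := by
    rw [smul_pow, LinearMap.smul_apply, cm, z1]; simp
  have e : D E e2 e3 = D E e1 e3 + (-1 : ℂ) • D E e1 e2 := by unfold D; module
  have z6 : ((D E e2 e3) ^ (Q + N)) (((D E e2 e3) ^ P) g) = 0 := by
    have := add_pow_zero (D E e1 e3) ((-1 : ℂ) • D E e1 e2) ((D_comm _ _ _ _).smul_right _) (Q + N) Q N _ rfl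
      z4 z5
    rwa [← e] at this
  refine ⟨Q + N + P, ?_⟩
  funext x
  have z7 : ((D E e2 e3) ^ (Q + N + P)) (((D E e1 e2) ^ j) g) = 0 := by
    rw [cm, pow_add, Module.End.mul_apply, z6, map_zero]
  rw [pull _ _ e2 e3 (br (prd j a b) c) (((D E e1 e2) ^ j) g) x (0, x) LinearMap.id, z7]
  · simp
  · intro r s
    rw [pg]
    simp [e2, e3, br, prd, adr_apply, E]

/-- formal derivative -/
def der (a : ℤ → Module.End ℂ V) : ℤ → Module.End ℂ V := fun n => -((n : ℂ) • a (n - 1))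

theorem der_aux {W : Type*} [AddCommGroup W] [Module ℂ W] (N : ℕ) : ∀ f : ℤ × ℤ → W,
    ((DD W) ^ N) f = 0 → ((DD W) ^ (N + 1)) (fun x => -((x.1 : ℂ) • f (x.1 - 1, x.2))) = 0 := by
  induction N with
  | zero =>
    intro f h
    have : f = 0 := by simpa using h
    subst this
    funext x
    simp [D_apply]
  | succ N ih =>
    intro f h
    have h' : ((DD W) ^ N) (DD W f) = 0 := by rwa [← Module.End.mul_apply, ← pow_succ]
    have e : DD W (fun x => -((x.1 : ℂ) • f (x.1 - 1, x.2)))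
        = (fun x => -((x.1 : ℂ) • (DD W f) (x.1 - 1, x.2))) - f := by
      funext x
      obtain ⟨m, n⟩ := x
      simp only [D_apply, Pi.sub_apply, Prod.mk_add_mk, add_zero, add_sub_cancel_right,
        sub_add_cancel]
      push_cast
      module
    rw [pow_succ, Module.End.mul_apply, e, map_sub, ih _ h', h, sub_zero]

theorem Loc.der {a c : ℤ → Module.End ℂ V} (h : Loc a c) : Loc (der a) c := by
  obtain ⟨N, h⟩ := h
  refine ⟨N + 1, ?_⟩
  rw [← der_aux N _ h]
  congr 1
  funext x
  simp only [br, VAProof.der, neg_mul, mul_neg, smul_mul_assoc, mul_smul_comm]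
  module

/-- translation covariance -/
def Cov (T : Module.End ℂ V) (a : ℤ → Module.End ℂ V) : Prop :=
  ∀ n : ℤ, T * a n - a n * T = -((n : ℂ) • a (n - 1))

theorem cov_prd (T : Module.End ℂ V) {a b : ℤ → Module.End ℂ V} (ha : Cov T a) (hb : Cov T b)
    (j : ℕ) : Cov T (prd j a b) := by
  have key : ∀ x : ℤ × ℤ, T * (((DD (Module.End ℂ V)) ^ j) (br a b)) x
      - (((DD (Module.End ℂ V)) ^ j) (br a b)) x * T
      = -((x.1 : ℂ) • (((DD (Module.End ℂ V)) ^ j) (br a b)) (x.1 - 1, x.2))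
        - ((x.2 : ℂ) • (((DD (Module.End ℂ V)) ^ j) (br a b)) (x.1, x.2 - 1)) := by
    induction j with
    | zero =>
      intro ⟨m, n⟩
      have h1 := ha m
      have h2 := hb n
      simp only [pow_zero, Module.End.one_apply, br]
      have : T * (a m * b n - b n * a m) - (a m * b n - b n * a m) * T
          = (T * a m - a m * T) * b n + a m * (T * b n - b n * T)
            - (T * b n - b n * T) * a m - b n * (T * a m - a m * T) := by noncomm_ring
      rw [this, h1, h2]
      simp only [neg_mul, mul_neg, smul_mul_assoc, mul_smul_comm]
      module
    | succ j ih =>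
      intro ⟨m, n⟩
      rw [pow_succ', Module.End.mul_apply]
      generalize ((DD (Module.End ℂ V)) ^ j) (br a b) = f at ih
      have h1 := ih (m + 1, n)
      have h2 := ih (m, n + 1)
      simp only [D_apply, Prod.mk_add_mk, add_zero, add_sub_cancel_right, sub_add_cancel] at *
      have : T * (f (m + 1, n) - f (m, n + 1)) - (f (m + 1, n) - f (m, n + 1)) * T
        = (T * f (m + 1, n) - f (m + 1, n) * T) - (T * f (m, n + 1) - f (m, n + 1) * T) := by
        noncomm_ring
      rw [this, h1, h2]
      push_cast
      module
  intro n
  have := key (0, n)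
  simpa [prd] using this

theorem prd_vac (vac : V) {a : ℤ → Module.End ℂ V} (ha : ∀ n, 0 ≤ n → a n vac = 0) (j : ℕ) :
    ∀ (b : ℤ → Module.End ℂ V), (∀ n, 0 ≤ n → b n vac = 0) → 
      (∀ n, 0 ≤ n → prd j a b n vac = 0) ∧ prd j a b (-1) vac = a j (b (-1) vac) := by
  intro b hb
  have key : ∀ n m : ℤ, 0 ≤ m → -1 ≤ n → (((DD (Module.End ℂ V)) ^ j) (br a b)) (m, n) vac
      = a (m + j) (b n vac) := by
    induction j with
    | zero =>
      intro n m hm hn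
      simp [br, ha m hm]
    | succ j ih =>
      intro n m hm hn
      rw [pow_succ', Module.End.mul_apply, D_apply]
      simp only [Prod.mk_add_mk, add_zero, LinearMap.sub_apply]
      rw [ih _ _ (by omega) hn, ih _ _ hm (by omega), hb (n + 1) (by omega)]
      simp only [map_zero, sub_zero]
      congr 2
      push_cast; ring
  refine ⟨fun n hn => ?_, ?_⟩
  · simp [prd, key n 0 le_rfl (by omega), hb n hn]
  · simp [prd, key (-1) 0 le_rfl le_rfl]

theorem br_mem {W : Type*} [AddCommGroup W] [Module ℂ W] (U : Submodule ℂ W) (N : ℕ) :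
    ∀ f : ℤ × ℤ → W, ((DD W) ^ N) f = 0 → (∀ (j : ℕ) (n : ℤ), ((DD W) ^ j) f (0, n) ∈ U) →
      ∀ m n : ℤ, f (m, n) ∈ U := by
  induction N with
  | zero =>
    intro f h _ m n
    have : f = 0 := by simpa using h
    simp [this]
  | succ N ih =>
    intro f h hU
    have h1 := ih (DD W f) (by rwa [← Module.End.mul_apply, ← pow_succ]) (fun j n => by
      have := hU (j + 1) n
      rwa [pow_succ, Module.End.mul_apply] at this)
    simp only [D_apply, Prod.mk_add_mk, add_zero] at h1
    intro m
    induction m using Int.induction_on with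
    | zero => intro n; simpa using hU 0 n
    | succ m ihm =>
      intro n
      simpa using U.add_mem (h1 m n) (ihm (n + 1))
    | pred m ihm =>
      intro n
      have := U.sub_mem (ihm (n - 1)) (h1 (-m - 1) (n - 1))
      simpa using this

end Fields

section VA
variable {V : Type*} [AddCommGroup V] [Module ℂ V] (A : UniformVertexAlgebra V)

/-- the field of `a` -/
def Y (a : V) : ℤ → Module.End ℂ V := fun n => A.mul n a

theorem loc_Y (a b : V) : Loc (Y A a) (Y A b) := by
  obtain ⟨N, h⟩ := A.locality a b
  refine ⟨N, funext fun x => LinearMap.ext fun c => ?_⟩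
  have := h x.1 x.2 c
  rw [D_pow, LinearMap.sum_apply]
  simp only [Pi.zero_apply, LinearMap.zero_apply]
  rw [← this]
  refine Finset.sum_congr rfl fun r hr => ?_
  have hr : r ≤ N := by simpa [Nat.lt_succ_iff] using hr
  simp [br, Y, Nat.cast_sub hr, add_sub_assoc]

theorem cov_Y (a : V) : Cov A.T (Y A a) := by
  intro n
  refine LinearMap.ext fun c => ?_
  have := A.translation n a c
  rw [← Int.cast_smul_eq_zsmul ℂ] at this
  simpa [Y] using this

theorem goddard (d : ℤ → Module.End ℂ V) (h0 : ∀ n, -1 ≤ n → d n A.vac = 0)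
    (hc : Cov A.T d) (hl : ∀ c, Loc d (Y A c)) : d = 0 := by
  have h1 : ∀ k : ℕ, d (-1 - k) A.vac = 0 := by
    intro k
    induction k with
    | zero => exact h0 _ (by simp)
    | succ k ih =>
      have := congrArg (fun f => f A.vac) (hc (-1 - k))
      simp only [LinearMap.sub_apply, Module.End.mul_apply, ih, A.T_vac, map_zero, sub_zero,
        LinearMap.neg_apply, LinearMap.smul_apply] at this
      have h2 := smul_eq_zero.1 (neg_eq_zero.1 this.symm)
      rcases h2 with h2 | h2
      · exfalso
        have : (-1 - (k : ℤ)) = 0 := by exact_mod_cast h2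
        omega
      · rw [← h2]; congr 2; push_cast; ring
  have h2 : ∀ n, d n A.vac = 0 := by
    intro n
    by_cases hn : -1 ≤ n
    · exact h0 n hn
    · have := h1 (-1 - n).toNat
      rw [Int.toNat_of_nonneg (by omega)] at this
      simpa using this
  funext n
  refine LinearMap.ext fun c => ?_
  obtain ⟨M, hM⟩ := hl c
  have key : ∀ (M : ℕ) (m n : ℤ), -1 ≤ n → 
      (((DD (Module.End ℂ V)) ^ M) (br d (Y A c))) (m, n) A.vac
      = d (m + M) (A.mul n c A.vac) := by
    intro M
    induction M with
    | zero => intro m n hn; simp [br, Y, h2]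
    | succ M ih =>
      intro m n hn
      rw [pow_succ', Module.End.mul_apply, D_apply]
      simp only [Prod.mk_add_mk, add_zero, LinearMap.sub_apply]
      rw [ih _ _ hn, ih _ _ (by omega), A.creation (n + 1) _ (by omega)]
      simp only [map_zero, sub_zero]
      congr 2
      push_cast; ring
  have := key M (n - M) (-1) le_rfl
  rw [hM, A.create_self] at this
  simpa using this.symm

theorem prd_eq (a b : V) (j : ℕ) : prd j (Y A a) (Y A b) = Y A (A.mul j a b) := by
  have hv := prd_vac A.vac (a := Y A a) (fun n hn => A.creation n a hn) j (Y A b)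
    (fun n hn => A.creation n b hn)
  rw [← sub_eq_zero]
  apply goddard A
  · intro n hn
    rw [Pi.sub_apply, LinearMap.sub_apply]
    rcases eq_or_lt_of_le hn with rfl | hn
    · rw [hv.2]; simp [Y, A.create_self]
    · rw [hv.1 n (by omega)]; simp [Y, A.creation n _ (show 0 ≤ n by omega)]
  · intro n
    have h1 := cov_prd A.T (cov_Y A a) (cov_Y A b) j n
    have h2 := cov_Y A (A.mul j a b) n
    simp only [Pi.sub_apply]
    rw [smul_sub, neg_sub', ← h1, ← h2]
    noncomm_ring
  · intro c
    rw [sub_eq_add_neg]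
    exact (dong j (loc_Y A a b) (loc_Y A a c) (loc_Y A b c)).add (loc_Y A _ c).neg

theorem Y_T (a : V) : Y A (A.T a) = der (Y A a) := by
  rw [← sub_eq_zero]
  apply goddard A
  · intro n hn
    rw [Pi.sub_apply, LinearMap.sub_apply]
    rcases eq_or_lt_of_le hn with rfl | hn
    · have := A.translation (-1) a A.vac
      simp only [A.create_self, A.T_vac, map_zero, sub_zero] at this
      simp [Y, A.create_self, der, this]
    · rcases eq_or_lt_of_le (show 0 ≤ n by omega) with rfl | hn
      · simp [Y, der, A.creation]
      · simp [Y, der, A.creation n _ hn.le, A.creation (n - 1) _ (show 0 ≤ n - 1 by omega)]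
  · intro n
    have h1 := cov_Y A (A.T a) n
    have h2 := cov_Y A a (n - 1)
    have : A.T * (Y A (A.T a) - der (Y A a)) n - (Y A (A.T a) - der (Y A a)) n * A.T
      = (A.T * Y A (A.T a) n - Y A (A.T a) n * A.T)
        + (n : ℂ) • (A.T * Y A a (n - 1) - Y A a (n - 1) * A.T) := by
      simp only [Pi.sub_apply, der, mul_sub, sub_mul, mul_neg, neg_mul, smul_mul_assoc,
        mul_smul_comm, smul_sub]
      abel
    rw [this, h1, h2]
    simp only [Pi.sub_apply, der]
    module
  · intro c
    rw [sub_eq_add_neg]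
    exact (loc_Y A _ c).add (loc_Y A a c).der.neg

variable (B : Set V)

/-- span of the identity and the modes of `B` -/
def U : Submodule ℂ (Module.End ℂ V) :=
  Submodule.span ℂ (insert 1 {f | ∃ (c : B) (k : ℤ), f = Y A c k})

theorem Y_mem_U {x : V} (hx : x ∈ Submodule.span ℂ
    (insert A.vac {x : V | ∃ (c : B) (j : ℕ), x = (A.T ^ j) (c : V)})) :
    ∀ k, Y A x k ∈ U A B := by
  induction hx using Submodule.span_induction with
  | mem x hx =>
    rcases hx with rfl | ⟨c, j, rfl⟩
    · intro k
      by_cases hk : k = -1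
      · have : Y A A.vac k = 1 := LinearMap.ext fun c => by simp [Y, A.vac_field, hk]
        rw [this]
        exact Submodule.subset_span (Set.mem_insert _ _)
      · have : Y A A.vac k = 0 := LinearMap.ext fun c => by simp [Y, A.vac_field, hk]
        rw [this]
        exact Submodule.zero_mem _
    · induction j with
      | zero =>
        intro k
        exact Submodule.subset_span (Set.mem_insert_of_mem _ ⟨c, k, rfl⟩)
      | succ j ih =>
        intro k
        rw [pow_succ', Module.End.mul_apply, Y_T]
        exact Submodule.neg_mem _ (Submodule.smul_mem _ _ (ih _))
  | zero =>
    intro k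
    simp [Y]
  | add x y _ _ hx hy =>
    intro k
    have : Y A (x + y) k = Y A x k + Y A y k := by simp [Y]
    rw [this]
    exact Submodule.add_mem _ (hx k) (hy k)
  | smul r x _ hx =>
    intro k
    have : Y A (r • x) k = r • Y A x k := by simp [Y]
    rw [this]
    exact Submodule.smul_mem _ _ (hx k)

theorem comm_mem (a b : V) (h : ∀ n : ℤ, 0 ≤ n → A.mul n a b ∈ Submodule.span ℂ
    (insert A.vac {x : V | ∃ (c : B) (j : ℕ), x = (A.T ^ j) (c : V)})) (m n : ℤ) :
    Y A a m * Y A b n - Y A b n * Y A a m ∈ U A B := by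
  obtain ⟨N, hN⟩ := loc_Y A a b
  refine br_mem (U A B) N (br (Y A a) (Y A b)) hN ?_ m n
  intro j k
  have : ((DD (Module.End ℂ V)) ^ j) (br (Y A a) (Y A b)) (0, k) = Y A (A.mul j a b) k :=
    congrFun (prd_eq A a b j) k
  rw [this]
  exact Y_mem_U A B (h j (by omega)) k

/-- product of the modes in a list -/
noncomputable def ops (l : List (B × ℤ)) : Module.End ℂ V :=
  (l.map fun p => Y A (p.1 : V) p.2).prod

theorem mono_append (l l' : List (B × ℤ)) :
    A.monomial B (l ++ l') = ops A B l (A.monomial B l') := by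
  induction l with
  | nil => simp [ops]
  | cons p l ih =>
    have : A.monomial B (p :: l ++ l') = Y A p.1 p.2 (A.monomial B (l ++ l')) := rfl
    rw [this, ih]
    simp [ops]

theorem mono_cons (p : B × ℤ) (l' : List (B × ℤ)) :
    A.monomial B (p :: l') = Y A p.1 p.2 (A.monomial B l') := rfl

/-- span of the monomials of length less than `r` -/
def Low (r : ℕ) : Submodule ℂ V :=
  Submodule.span ℂ {x | ∃ l : List (B × ℤ), l.length < r ∧ x = A.monomial B l}

theorem perm_low (hU : ∀ (a b : B) (m n : ℤ), Y A a m * Y A b n - Y A b n * Y A a m ∈ U A B)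
    {l l' : List (B × ℤ)} (h : l.Perm l') : ∀ pre : List (B × ℤ),
      A.monomial B (pre ++ l) - A.monomial B (pre ++ l') ∈ Low A B (pre ++ l).length := by
  induction h with
  | nil => intro pre; simp
  | cons x h ih =>
    intro pre
    simpa using ih (pre ++ [x])
  | swap x y l =>
    intro pre
    rw [mono_append, mono_append, ← map_sub]
    simp only [mono_cons]
    have h := hU y.1 x.1 y.2 x.2
    have e : Y A y.1 y.2 (Y A x.1 x.2 (A.monomial B l)) - Y A x.1 x.2 (Y A y.1 y.2 (A.monomial B l))
      = (Y A y.1 y.2 * Y A x.1 x.2 - Y A x.1 x.2 * Y A y.1 y.2) (A.monomial B l) := rfl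
    rw [e]
    generalize Y A y.1 y.2 * Y A x.1 x.2 - Y A x.1 x.2 * Y A y.1 y.2 = f at h
    unfold U at h
    induction h using Submodule.span_induction with
    | mem f hf =>
      rcases hf with rfl | ⟨c, k, rfl⟩
      · refine Submodule.subset_span ⟨pre ++ l, by simp, ?_⟩
        rw [mono_append]; rfl
      · refine Submodule.subset_span ⟨pre ++ (c, k) :: l, by simp, ?_⟩
        rw [mono_append]; rfl
    | zero => simp
    | add f g _ _ hf hg =>
      rw [LinearMap.add_apply, map_add]; exact Submodule.add_mem _ hf hg
    | smul r f _ hf =>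
      rw [LinearMap.smul_apply, map_smul]; exact Submodule.smul_mem _ _ hf
  | trans h1 h2 ih1 ih2 =>
    intro pre
    have h3 := ih2 pre
    have : ∀ l l' : List (B × ℤ), l.Perm l' → (pre ++ l).length = (pre ++ l').length := by
      intro l l' h; simp [h.length_eq]
    rw [← this _ _ h1] at h3
    simpa using Submodule.add_mem _ (ih1 pre) h3

end VA

end VAProof

/-- let `V` be a uniform vertex algebra with `V_n = 0` for `n < m₀`, and let
`B` be a totally ordered set of homogeneous elements such that (i) the monomials
`b_1(n_1)⋯b_r(n_r)1` with `b_i ∈ B` span `V`, and (ii) each `a(n)b` for `a ≤ b` in `B` and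
`n ≥ 0` lies in the span of `{1} ∪ {L₋₁^j c : c ∈ B}`.  Then the *ordered* monomials —
those with `0 > n_1 ≥ n_2 ≥ ⋯ ≥ n_r` and `b_i ≥ b_{i+1}` whenever `n_i = n_{i+1}` —
already span `V`. -/
theorem span_ordered_monomials {V : Type*} [AddCommGroup V] [Module ℂ V]
    (A : UniformVertexAlgebra V) (m₀ : ℤ)
    (hconn : ∀ n : ℤ, n < m₀ → A.grading n = ⊥)
    (B : Set V) (lo : LinearOrder B)
    (hhom : ∀ b ∈ B, ∃ d : ℤ, b ∈ A.grading d)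
    (hspan : Submodule.span ℂ {x : V | ∃ l : List (B × ℤ), x = A.monomial B l} = ⊤)
    (hOPE : ∀ a b : B, lo.le a b → ∀ n : ℤ, 0 ≤ n →
      A.mul n (a : V) (b : V) ∈
        Submodule.span ℂ
          (insert A.vac {x : V | ∃ (c : B) (j : ℕ), x = (A.T ^ j) (c : V)})) :
    Submodule.span ℂ
      {x : V | ∃ l : List (B × ℤ),
        (∀ p ∈ l, p.2 < 0) ∧
        l.Chain' (fun p q => q.2 ≤ p.2 ∧ (p.2 = q.2 → lo.le q.1 p.1)) ∧
        x = A.monomial B l} = ⊤ := by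
  have hU : ∀ (a b : B) (m n : ℤ), VAProof.Y A a m * VAProof.Y A b n
      - VAProof.Y A b n * VAProof.Y A a m ∈ VAProof.U A B := by
    intro a b m n
    rcases lo.le_total a b with h | h
    · exact VAProof.comm_mem A B a b (hOPE a b h) m n
    · have := VAProof.comm_mem A B b a (hOPE b a h) n m
      simpa using Submodule.neg_mem _ this
  rw [eq_top_iff, ← hspan, Submodule.span_le]
  rintro x ⟨l, rfl⟩
  simp only [SetLike.mem_coe]
  generalize hO : Submodule.span ℂ
      {x : V | ∃ l : List (B × ℤ),
        (∀ p ∈ l, p.2 < 0) ∧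
        l.Chain' (fun p q => q.2 ≤ p.2 ∧ (p.2 = q.2 → lo.le q.1 p.1)) ∧
        x = A.monomial B l} = O
  induction hr : l.length using Nat.strong_induction_on generalizing l with
  | _ r ih =>
  have hlow : VAProof.Low A B r ≤ O := by
    refine Submodule.span_le.2 ?_
    rintro x ⟨l', hl', rfl⟩
    exact ih _ hl' l' rfl
  have hperm : ∀ l' : List (B × ℤ), l.Perm l' → A.monomial B l' ∈ O → A.monomial B l ∈ O := by
    intro l' h h'
    have h1 := VAProof.perm_low A B hU h []
    simp only [List.nil_append] at h1
    rw [hr] at h1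
    simpa using O.add_mem (hlow h1) h'
  by_cases hneg : ∀ p ∈ l, p.2 < 0
  · classical
    let R : B × ℤ → B × ℤ → Prop := fun p q => q.2 ≤ p.2 ∧ (p.2 = q.2 → lo.le q.1 p.1)
    have htot : Std.Total R := ⟨by
      intro p q
      rcases lt_trichotomy p.2 q.2 with h | h | h
      · exact Or.inr ⟨h.le, fun h' => absurd h' h.ne'⟩
      · rcases lo.le_total p.1 q.1 with h' | h'
        · exact Or.inr ⟨h.le, fun _ => h'⟩
        · exact Or.inl ⟨h.ge, fun _ => h'⟩
      · exact Or.inl ⟨h.le, fun h' => absurd h' h.ne'⟩⟩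
    have htr : IsTrans _ R := ⟨by
      rintro p q s ⟨h1, h2⟩ ⟨h3, h4⟩
      refine ⟨h3.trans h1, fun h => ?_⟩
      exact lo.le_trans _ _ _ (h4 (by omega)) (h2 (by omega))⟩
    have hp := List.perm_insertionSort R l
    refine hperm _ hp.symm ?_
    rw [← hO]
    refine Submodule.subset_span ⟨_, fun p h => hneg p (hp.mem_iff.1 h), ?_, rfl⟩
    exact (List.pairwise_insertionSort R l).isChain
  · classical
    push Not at hneg
    obtain ⟨p, hp, hp0⟩ := hneg
    refine hperm (l.erase p ++ [p])
      ((List.perm_cons_erase hp).trans (List.perm_append_singleton _ _).symm) ?_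
    rw [VAProof.mono_append, VAProof.mono_cons]
    have : VAProof.Y A p.1 p.2 (A.monomial B []) = 0 := A.creation _ _ hp0
    rw [this, map_zero]
    exact O.zero_mem
end
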